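/- arXiv:2104.05954 — 9 statements merged into one kernel-verified Lean document; each statement's English description precedes it below -/
import Mathlib

section
/- Let N ≥ 2 and 1 ≤ p ≤ ⌊N/2⌋ be integers and set m = gcd(N,p). If N/m ≤ 4, then there exists no feasible vector for (N,p); that is, no x ∈ {0,1}^{N−1} with x_l = x_{N−l} for all l ∈ {1,…,N−1} satisfies ∑_{l=1}^{N−1} x_l·cos(2πpl/N)·(−1 + cos(2πkl/N)) < 0 for every k ∈ {1,…,N−1}. -/
open Real Finset

/-- `x : ℕ → ℝ` is a feasible vector for `(N, p)`: each `x l` (for `l = 1, …, N-1`)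
is `0` or `1`, `x` satisfies the symmetry `x l = x (N - l)`, and
`(L^{(N,p)} x)_k < 0` for every `k = 1, …, N-1`. -/
def feasible (N p : ℕ) (x : ℕ → ℝ) : Prop :=
  (∀ l ∈ Finset.Icc 1 (N - 1), x l = 0 ∨ x l = 1) ∧
  (∀ l ∈ Finset.Icc 1 (N - 1), x l = x (N - l)) ∧
  (∀ k ∈ Finset.Icc 1 (N - 1),
    ∑ l ∈ Finset.Icc 1 (N - 1),
      x l * Real.cos (2 * π * p * l / N) * (-1 + Real.cos (2 * π * k * l / N)) < 0)

/-!
In a row `k ≡ p (mod N)` the `l`-th entry is `cos θ * (-1 + cos θ)` with `θ = 2πpl/N`, an angle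
killed by `N / gcd(N, p)`. A nonzero angle of order at most `4` is at least a quarter turn away
from `0`, so its cosine is nonpositive. Hence every entry of that row is nonnegative, and the row
pairs nonnegatively with every nonnegative vector.
-/

theorem eq_zero_or_cos_nonpos_of_nsmul_eq_zero {n : ℕ} (hn : n ≠ 0) (hn4 : n ≤ 4)
    {θ : Real.Angle} (h : n • θ = 0) : θ = 0 ∨ θ.cos ≤ 0 := by
  refine or_iff_not_imp_right.2 fun hcos ↦ ?_
  have habs : |θ.toReal| < π / 2 :=
    Real.Angle.cos_pos_iff_abs_toReal_lt_pi_div_two.1 (not_le.1 hcos)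
  have hcos_mul : Real.cos (n * θ.toReal) = 1 := by
    rw [← Real.Angle.cos_coe, ← nsmul_eq_mul, Real.Angle.coe_nsmul, Real.Angle.coe_toReal, h,
      Real.Angle.cos_zero]
  have hlt : |n * θ.toReal| < 2 * π := calc
    |n * θ.toReal| = n * |θ.toReal| := by rw [abs_mul, Nat.abs_cast]
    _ ≤ 4 * |θ.toReal| := by gcongr; exact_mod_cast hn4
    _ < 2 * π := by linarith
  have hzero : n * θ.toReal = 0 :=
    (Real.cos_eq_one_iff_of_lt_of_lt (abs_lt.1 hlt).1 (abs_lt.1 hlt).2).1 hcos_mul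
  exact Real.Angle.toReal_eq_zero_iff.1
    ((mul_eq_zero.1 hzero).resolve_left (Nat.cast_ne_zero.2 hn))

theorem cos_mul_neg_one_add_cos_nonneg_of_nsmul_eq_zero {n : ℕ} (hn : n ≠ 0) (hn4 : n ≤ 4)
    {θ : Real.Angle} (h : n • θ = 0) : 0 ≤ θ.cos * (-1 + θ.cos) := by
  rcases eq_zero_or_cos_nonpos_of_nsmul_eq_zero hn hn4 h with rfl | hcos
  · simp
  · exact mul_nonneg_of_nonpos_of_nonpos hcos (by linarith)

theorem coe_two_pi_mul_div_eq_of_modEq {N a b : ℕ} (hN : N ≠ 0) (h : a ≡ b [MOD N]) :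
    ((2 * π * a / N : ℝ) : Real.Angle) = (2 * π * b / N : ℝ) := by
  obtain ⟨c, hc⟩ := Nat.modEq_iff_dvd.1 h.symm
  have hc' : (a : ℝ) - b = N * c := by exact_mod_cast hc
  refine Real.Angle.angle_eq_iff_two_pi_dvd_sub.2 ⟨c, ?_⟩
  rw [← sub_div, ← mul_sub, hc']
  field_simp

theorem nsmul_coe_two_pi_mul_div_eq_zero {N n a : ℕ} (hN : N ≠ 0) (h : N ∣ n * a) :
    n • ((2 * π * a / N : ℝ) : Real.Angle) = 0 := calc
  n • ((2 * π * a / N : ℝ) : Real.Angle) = (2 * π * (n * a : ℕ) / N : ℝ) := by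
    rw [← Real.Angle.coe_nsmul, nsmul_eq_mul, Nat.cast_mul]
    ring_nf
  _ = (2 * π * (0 : ℕ) / N : ℝ) :=
    coe_two_pi_mul_div_eq_of_modEq hN (Nat.modEq_zero_iff_dvd.2 h)
  _ = 0 := by simp

theorem dvd_div_gcd_mul (N p : ℕ) : N ∣ N / N.gcd p * p := by
  rw [Nat.div_mul_right_comm (Nat.gcd_dvd_left N p)]
  exact Nat.dvd_lcm_left N p

theorem cos_mul_neg_one_add_cos_nonneg_of_modEq {N p k : ℕ} (hN : N ≠ 0)
    (h : N / N.gcd p ≤ 4) (hk : k ≡ p [MOD N]) (l : ℕ) :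
    0 ≤ Real.cos (2 * π * p * l / N) * (-1 + Real.cos (2 * π * k * l / N)) := by
  have horder : (N / N.gcd p) • ((2 * π * (p * l : ℕ) / N : ℝ) : Real.Angle) = 0 :=
    nsmul_coe_two_pi_mul_div_eq_zero hN (mul_assoc _ p l ▸ (dvd_div_gcd_mul N p).mul_right l)
  have hquot : N / N.gcd p ≠ 0 := (Nat.div_gcd_pos_of_pos_left p (Nat.pos_of_ne_zero hN)).ne'
  have hnonneg := cos_mul_neg_one_add_cos_nonneg_of_nsmul_eq_zero hquot h horder
  have hcos := congrArg Real.Angle.cos (coe_two_pi_mul_div_eq_of_modEq hN (hk.mul_right l))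
  simp only [Real.Angle.cos_coe, Nat.cast_mul, ← mul_assoc] at hnonneg hcos
  rwa [hcos]

theorem no_feasible_of_small_Ntilde_general {N p : ℕ} (hN : N ≠ 0) (hp : ¬ N ∣ p)
    (h : N / N.gcd p ≤ 4) {x : ℕ → ℝ} (hx : ∀ l ∈ Icc 1 (N - 1), 0 ≤ x l) :
    ∃ k ∈ Icc 1 (N - 1), 0 ≤ ∑ l ∈ Icc 1 (N - 1),
      x l * Real.cos (2 * π * p * l / N) * (-1 + Real.cos (2 * π * k * l / N)) := by
  have hmod_pos : 0 < p % N := Nat.pos_of_ne_zero (mt Nat.dvd_of_mod_eq_zero hp)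
  have hmod_lt : p % N < N := Nat.mod_lt p (Nat.pos_of_ne_zero hN)
  refine ⟨p % N, mem_Icc.2 ⟨hmod_pos, Nat.le_sub_one_of_lt hmod_lt⟩, sum_nonneg fun l hl ↦ ?_⟩
  rw [mul_assoc]
  exact mul_nonneg (hx l hl) (cos_mul_neg_one_add_cos_nonneg_of_modEq hN h (Nat.mod_modEq p N) l)

/-- If `N ≥ 2`, `1 ≤ p ≤ ⌊N/2⌋` and `N / gcd(N,p) ≤ 4`, then there is no
feasible vector for `(N, p)`. -/
theorem no_feasible_of_small_Ntilde (N p : ℕ) (hN : 2 ≤ N) (hp1 : 1 ≤ p) (hp2 : p ≤ N / 2)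
    (h : N / Nat.gcd N p ≤ 4) : ¬ ∃ x : ℕ → ℝ, feasible N p x := by
  rintro ⟨x, hx, -, hneg⟩
  have hx_nonneg : ∀ l ∈ Icc 1 (N - 1), 0 ≤ x l := fun l hl ↦ by
    rcases hx l hl with hl | hl <;> simp [hl]
  obtain ⟨k, hk, hsum⟩ := no_feasible_of_small_Ntilde_general (by omega)
    (Nat.not_dvd_of_pos_of_lt hp1 (by omega)) h hx_nonneg
  exact (hneg k hk).not_ge hsum
end

section
/- The supremum of the set {(∑_{l=1}^{N−1} x_l)/(N−1) : N ≥ 2, 1 ≤ p ≤ ⌊N/2⌋, x feasible for (N,p)} equals 11/19 − (2/19)·(∑_{l=1}^{5} [−cos(2πl/19) + cos²(2πl/19)]) / (−cos(12π/19) + cos²(12π/19)) = 0.683875… . -/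
open Real Finset

/-!
Keep only the row `k = p` of the system. It says that the chosen `l` have negative total weight
`cos θ (cos θ - 1)`, `θ = 2πpl/N`, and bounding the number of chosen `l` under this constraint alone
is a linear program. Since the `pl` run uniformly through the residues modulo
`n = N / gcd p N`, the program depends only on `n`. Weak duality with the multiplier
`1 / (c ^ 2 - c)` bounds the connectivity, where `c` is the cosine of the first angle that is not
filled up. For `n = 19` this bound is the supremum. It is smaller for all other `n < 30` by
computation, and for `n ≥ 30` because it tends to `2/9 + 5√3/(6π) ≈ 0.682`; for `n = 4` all weights
are nonnegative and no vector is feasible.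

Conversely, take `N = 19g`, `p = g`, all residues `|r| ≤ 5` modulo 19 and the residues `±6` in as
many blocks as the row `k = p` allows. If `g ∤ k`, the cosines in the row `k` cancel along each
residue class, and if `g ∣ k`, the row is a value of Dirichlet kernels on the 19-gon, which are
largest at the first angle. As `g → ∞` the bound is approached.
-/

section Sums

variable {M : Type*} [AddCommMonoid M]

lemma sum_range_mul_eq_sum_sum (f : ℕ → M) (n g : ℕ) :
    ∑ l ∈ range (n * g), f l = ∑ a ∈ range g, ∑ r ∈ range n, f (n * a + r) := by
  induction g with
  | zero => simp
  | succ g ih => rw [mul_add_one, sum_range_add, ih, sum_range_succ _ g]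

lemma sum_range_mul_of_periodic {f : ℕ → M} {n : ℕ} (hf : Function.Periodic f n) (g : ℕ) :
    ∑ l ∈ range (n * g), f l = g • ∑ r ∈ range n, f r := by
  have hshift (a r : ℕ) : f (n * a + r) = f r := by
    rw [add_comm, mul_comm]
    simpa using hf.nat_mul a r
  simp only [sum_range_mul_eq_sum_sum, hshift, sum_const, card_range]

lemma sum_range_coprime_mul {f : ℕ → M} {n q : ℕ} (hf : Function.Periodic f n)
    (hq : q.Coprime n) : ∑ l ∈ range n, f (q * l) = ∑ l ∈ range n, f l := by
  have hmaps : Set.MapsTo (fun l ↦ q * l % n) (range n) (range n) := fun l hl ↦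
    mem_coe.2 (mem_range.2 (Nat.mod_lt _ (Nat.zero_lt_of_lt (mem_range.1 hl))))
  have hinj : Set.InjOn (fun l ↦ q * l % n) (range n : Set ℕ) := fun a ha b hb hab ↦
    (Nat.ModEq.cancel_left_of_coprime hq.symm hab).eq_of_lt_of_lt (mem_range.1 ha)
      (mem_range.1 hb)
  exact sum_nbij (fun l ↦ q * l % n) hmaps hinj (surjOn_of_injOn_of_card_le _ hmaps hinj le_rfl)
    fun l _ ↦ (hf.map_mod_nat _).symm

lemma sum_range_eq_add_sum_Icc {f : ℕ → M} {n : ℕ} (hn : 0 < n) :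
    ∑ l ∈ range n, f l = f 0 + ∑ l ∈ Icc 1 (n - 1), f l := by
  have hrange : range n = insert 0 (Icc 1 (n - 1)) := by
    ext l
    simp only [mem_range, mem_insert, mem_Icc]
    omega
  rw [hrange, sum_insert (by simp)]

lemma sum_range_of_reflect {S : ℕ → M} {n K : ℕ} (hK : 2 * K < n)
    (hreflect : ∀ r ∈ Icc 1 K, S (n - r) = S r) (hzero : ∀ r ∈ Ioo K (n - K), S r = 0) :
    ∑ r ∈ range n, S r = S 0 + 2 • ∑ r ∈ Icc 1 K, S r := by
  have hupper : ∑ r ∈ Icc (n - K) (n - 1), S r = ∑ r ∈ Icc 1 K, S r := by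
    refine sum_nbij' (n - ·) (n - ·) ?_ ?_ ?_ ?_ fun r hr ↦ ?_
    case refine_5 =>
      rw [← hreflect (n - r) (by grind), Nat.sub_sub_self (by grind)]
    all_goals grind
  have hsplit : range n = insert 0 (Icc 1 K) ∪ (Ioo K (n - K) ∪ Icc (n - K) (n - 1)) := by
    ext r
    simp only [mem_range, mem_union, mem_insert, mem_Icc, mem_Ioo]
    omega
  rw [hsplit, sum_union, sum_union, sum_insert (by simp), sum_eq_zero hzero, hupper, zero_add,
    two_nsmul, add_assoc]
  all_goals
    rw [disjoint_left]
    grind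

/- Reflection maps the block `a` to the block `g - 1 - a`, so only sums over all blocks are
symmetric. -/
lemma sum_range_mul_of_reflect {F : ℕ → M} {n g K : ℕ} (hK : 2 * K < n)
    (hreflect : ∀ l ∈ Icc 1 (n * g - 1), F (n * g - l) = F l)
    (hzero : ∀ a, ∀ r ∈ Ioo K (n - K), F (n * a + r) = 0) :
    ∑ l ∈ range (n * g), F l =
      ∑ a ∈ range g, F (n * a) + 2 • ∑ r ∈ Icc 1 K, ∑ a ∈ range g, F (n * a + r) := by
  rw [sum_range_mul_eq_sum_sum, sum_comm, sum_range_of_reflect hK]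
  · simp only [add_zero]
  · intro r hr
    rw [mem_Icc] at hr
    rw [← sum_range_reflect]
    refine sum_congr rfl fun a ha ↦ ?_
    obtain ⟨b, rfl⟩ := Nat.exists_eq_add_of_lt (mem_range.1 ha)
    rw [← hreflect (n * a + r)]
    · congr 1
      have : a + b + 1 - 1 - a = b := by omega
      rw [this, mul_add_one, mul_add]
      omega
    · rw [mem_Icc, mul_add_one, mul_add]
      omega
  · exact fun r hr ↦ sum_eq_zero fun a _ ↦ hzero a r hr

end Sums

lemma cos_two_pi_div_three : cos (2 * π / 3) = -1 / 2 := by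
  rw [show 2 * π / 3 = π - π / 3 by ring, cos_pi_sub, cos_pi_div_three]
  norm_num

lemma sin_le_sin_of_mem_Icc_pi_sub {a x : ℝ} (ha : 0 ≤ a) (hx : x ∈ Set.Icc a (π - a)) :
    sin a ≤ sin x := by
  rw [← cos_pi_div_two_sub, ← cos_pi_div_two_sub, ← cos_abs (π / 2 - x)]
  have habs : |π / 2 - x| ≤ π / 2 - a := by
    rw [abs_le]
    constructor <;> linarith [hx.1, hx.2]
  exact cos_le_cos_of_nonneg_of_le_pi (abs_nonneg _) (by linarith [pi_pos]) habs

/-- The `j`-th cosine of the regular `n`-gon. The matrix entries are products of such cosines with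
`n = N`; the argument `j` is not reduced modulo `n`. -/
noncomputable def circleCos (n j : ℕ) : ℝ := cos (2 * π * j / n)

section CircleCos

variable {n j : ℕ}

@[simp] lemma circleCos_zero_right (n : ℕ) : circleCos n 0 = 1 := by simp [circleCos]

lemma neg_one_le_circleCos (n j : ℕ) : -1 ≤ circleCos n j := neg_one_le_cos _

lemma circleCos_le_one (n j : ℕ) : circleCos n j ≤ 1 := cos_le_one _

lemma circleCos_periodic (n : ℕ) : Function.Periodic (circleCos n) n := by
  intro j
  rcases eq_or_ne n 0 with rfl | hn
  · simp
  · rw [circleCos, circleCos, ← cos_add_two_pi (2 * π * j / n)]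
    congr 1
    push_cast
    field_simp

lemma circleCos_mul_add (n a j : ℕ) : circleCos n (n * a + j) = circleCos n j := by
  rw [add_comm, mul_comm]
  simpa using (circleCos_periodic n).nat_mul a j

lemma circleCos_mul_sub {a : ℕ} (hj : j ≤ n * a) : circleCos n (n * a - j) = circleCos n j := by
  rcases eq_or_ne n 0 with rfl | hn
  · simp [circleCos]
  · rw [circleCos, circleCos, ← cos_nat_mul_two_pi_sub (2 * π * j / n) a]
    congr 1
    push_cast [hj]
    field_simp

lemma circleCos_mul_sub_one_mul (hn : 0 < n) (r : ℕ) :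
    circleCos n ((n - 1) * r) = circleCos n r := by
  rw [Nat.sub_one_mul, circleCos_mul_sub (Nat.le_mul_of_pos_left r hn)]

lemma circleCos_mul_mul {g : ℕ} (hg : g ≠ 0) (n j : ℕ) :
    circleCos (n * g) (j * g) = circleCos n j := by
  rw [circleCos, circleCos]
  congr 1
  push_cast
  field_simp

lemma circleCos_anti {i : ℕ} (hij : i ≤ j) (hj : 2 * j ≤ n) : circleCos n j ≤ circleCos n i := by
  rcases Nat.eq_zero_or_pos n with rfl | hn
  · simp [circleCos]
  · have hjn : (2 * j : ℝ) / n ≤ 1 := by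
      rw [div_le_one (by positivity)]
      exact_mod_cast hj
    refine cos_le_cos_of_nonneg_of_le_pi (by positivity) ?_ (by gcongr)
    calc 2 * π * j / n = 2 * j / n * π := by ring
      _ ≤ π := mul_le_of_le_one_left pi_pos.le hjn

lemma circleCos_neg (hj : n < 4 * j) (hjn : 2 * j ≤ n) : circleCos n j < 0 := by
  have hn : (0 : ℝ) < n := by exact_mod_cast (by omega : 0 < n)
  have hj' : (n : ℝ) < 4 * j := by exact_mod_cast hj
  have hjn' : (2 : ℝ) * j ≤ n := by exact_mod_cast hjn
  have hpi := pi_pos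
  apply cos_neg_of_pi_div_two_lt_of_lt
  · rw [lt_div_iff₀ hn]
    nlinarith
  · rw [div_lt_iff₀ hn]
    nlinarith

lemma neg_half_le_circleCos (h : 3 * j ≤ n) : -1 / 2 ≤ circleCos n j := by
  rw [← cos_two_pi_div_three]
  refine cos_le_cos_of_nonneg_of_le_pi (by positivity) (by linarith [pi_pos]) ?_
  have h' : (3 * j : ℝ) ≤ n := by exact_mod_cast h
  refine div_le_of_le_mul₀ (by positivity) (by positivity) ?_
  nlinarith [pi_pos]

lemma circleCos_le_neg_half (h : n ≤ 3 * j) (hj : 2 * j ≤ n) (hn : 0 < n) :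
    circleCos n j ≤ -1 / 2 := by
  have hn' : (0 : ℝ) < n := by exact_mod_cast hn
  have h' : (n : ℝ) ≤ 3 * j := by exact_mod_cast h
  have hj' : (2 * j : ℝ) ≤ n := by exact_mod_cast hj
  rw [← cos_two_pi_div_three]
  refine cos_le_cos_of_nonneg_of_le_pi (by positivity) ?_ ?_
  · rw [div_le_iff₀ hn']
    nlinarith [pi_pos]
  · rw [le_div_iff₀ hn']
    nlinarith [pi_pos]

lemma sum_circleCos_arithmetic_eq_zero {n g k : ℕ} (hn : n ≠ 0) (hk : ¬ g ∣ k) (r : ℕ) :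
    ∑ a ∈ range g, circleCos (n * g) (k * (n * a + r)) = 0 := by
  rcases eq_or_ne g 0 with rfl | hg
  · simp
  have hangle (a : ℕ) : circleCos (n * g) (k * (n * a + r))
      = cos (2 * π * k / g * a + 2 * π * k * r / (n * g)) := by
    rw [circleCos]
    congr 1
    push_cast
    field_simp
  have hsin : sin (2 * π * k / g / 2) ≠ 0 := by
    rw [Ne, sin_eq_zero_iff]
    rintro ⟨m, hm⟩
    have hmk : (m * g : ℝ) = k := by
      field_simp at hm
      linarith
    exact hk (Int.natCast_dvd_natCast.1 ⟨m, by exact_mod_cast (mul_comm (m : ℝ) g ▸ hmk).symm⟩)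
  have hsum := sin_mul_sum_cos g (2 * π * k / g) (2 * π * k * r / (n * g))
  rw [show g * (2 * π * k / g) / 2 = k * π by field_simp, sin_nat_mul_pi, zero_mul] at hsum
  simp only [hangle]
  exact (mul_eq_zero.1 hsum).resolve_left hsin

end CircleCos

/-- The Dirichlet kernel of order `K`, at the angle `2πj/n`. -/
noncomputable def dirichletKernel (K n j : ℕ) : ℝ := 1 + 2 * ∑ r ∈ Icc 1 K, circleCos n (j * r)

lemma sin_mul_dirichletKernel (K n j : ℕ) :
    sin (π * j / n) * dirichletKernel K n j = sin ((2 * K + 1) * (π * j / n)) := by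
  set a := π * j / n
  have hcos (r : ℕ) : circleCos n (j * r) = cos (2 * r * a) := by
    rw [circleCos]
    congr 1
    push_cast
    ring
  rw [dirichletKernel]
  simp only [hcos]
  induction K with
  | zero => simp
  | succ K ih =>
    have hstep := two_mul_sin_mul_cos a (2 * ((K + 1 : ℕ) : ℝ) * a)
    rw [show a - 2 * ((K + 1 : ℕ) : ℝ) * a = -((2 * K + 1) * a) by push_cast; ring, sin_neg,
      show a + 2 * ((K + 1 : ℕ) : ℝ) * a = (2 * ((K + 1 : ℕ) : ℝ) + 1) * a by ring] at hstep
    rw [sum_Icc_succ_top (by omega)]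
    linarith

lemma dirichletKernel_sub_one {n : ℕ} (hn : 0 < n) (K : ℕ) :
    dirichletKernel K n (n - 1) = dirichletKernel K n 1 := by
  simp only [dirichletKernel, circleCos_mul_sub_one_mul hn, one_mul]

lemma four_mul_sum_circleCos_mul (n K j : ℕ) :
    4 * ∑ r ∈ Icc 1 K, circleCos n r * (-1 + circleCos n ((j + 1) * r)) =
      dirichletKernel K n (j + 2) + dirichletKernel K n j - 2 * dirichletKernel K n 1 := by
  have hproduct (r : ℕ) : 4 * (circleCos n r * (-1 + circleCos n ((j + 1) * r)))
      = 2 * circleCos n ((j + 2) * r) + 2 * circleCos n (j * r) - 4 * circleCos n (1 * r) := by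
    have h := two_mul_cos_mul_cos (2 * π * ((j + 1) * r : ℕ) / n) (2 * π * r / n)
    rw [show 2 * π * ((j + 1) * r : ℕ) / n - 2 * π * r / n = 2 * π * (j * r : ℕ) / n by
        push_cast; ring,
      show 2 * π * ((j + 1) * r : ℕ) / n + 2 * π * r / n = 2 * π * ((j + 2) * r : ℕ) / n by
        push_cast; ring] at h
    simp only [circleCos, one_mul]
    linarith
  rw [mul_sum, sum_congr rfl fun r _ ↦ hproduct r, sum_sub_distrib, sum_add_distrib, ← mul_sum,
    ← mul_sum, ← mul_sum, dirichletKernel, dirichletKernel, dirichletKernel]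
  ring

/-- The weight `cos θ (cos θ - 1)` at the angle `θ = 2πj/n`: by the row `k = p` of the system, the
`weight N (p * l)` of the chosen `l` have a negative sum. -/
noncomputable def weight (n j : ℕ) : ℝ := -circleCos n j + circleCos n j ^ 2

lemma weight_periodic (n : ℕ) : Function.Periodic (weight n) n := fun j ↦ by
  rw [weight, weight, circleCos_periodic n j]

@[simp] lemma weight_zero_right (n : ℕ) : weight n 0 = 0 := by simp [weight]

lemma weight_sub {n j : ℕ} (hj : j ≤ n) : weight n (n - j) = weight n j := by
  have h := circleCos_mul_sub (n := n) (a := 1) (by simpa using hj)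
  rw [mul_one] at h
  rw [weight, weight, h]

lemma weight_mul_mul {g : ℕ} (hg : g ≠ 0) (n j : ℕ) : weight (n * g) (j * g) = weight n j := by
  rw [weight, weight, circleCos_mul_mul hg]

lemma neg_add_sq_le_neg_add_sq {s t : ℝ} (hst : s ≤ t) (hsum : s + t ≤ 1) :
    -t + t ^ 2 ≤ -s + s ^ 2 := by
  nlinarith

lemma weight_pos_of_circleCos_neg {n j : ℕ} (h : circleCos n j < 0) : 0 < weight n j := by
  have := sq_nonneg (circleCos n j)
  rw [weight]
  linarith

lemma weight_four_nonneg (j : ℕ) : 0 ≤ weight 4 j := by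
  have hone : circleCos 4 1 = 0 := by
    rw [circleCos, ← cos_pi_div_two]
    congr 1
    push_cast
    ring
  have hweight_one : weight 4 1 = 0 := by simp [weight, hone]
  have hweight_two : 0 ≤ weight 4 2 := by
    have h := circleCos_anti (n := 4) one_le_two le_rfl
    have := sq_nonneg (circleCos 4 2)
    rw [weight]
    linarith
  have hweight_three : weight 4 3 = 0 := hweight_one ▸ weight_sub (n := 4) (j := 1) (by norm_num)
  rw [← (weight_periodic 4).map_mod_nat j]
  have : j % 4 < 4 := Nat.mod_lt _ (by norm_num)
  interval_cases j % 4
  exacts [(weight_zero_right 4).ge, hweight_one.ge, hweight_two, hweight_three.ge]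

lemma two_mul_sum_weight (n K : ℕ) :
    2 * ∑ j ∈ Icc 1 K, weight n j =
      K + 1 / 2 - dirichletKernel K n 1 + dirichletKernel K n 2 / 2 := by
  have hweight (j : ℕ) :
      2 * weight n j = 1 - 2 * circleCos n (1 * j) + circleCos n (2 * j) := by
    have hdouble : circleCos n (2 * j) = 2 * circleCos n j ^ 2 - 1 := by
      rw [circleCos, circleCos, ← cos_two_mul]
      congr 1
      push_cast
      ring
    rw [weight, one_mul, hdouble]
    ring
  rw [mul_sum, sum_congr rfl fun j _ ↦ hweight j, sum_add_distrib, sum_sub_distrib, ← mul_sum,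
    sum_const, Nat.card_Icc, nsmul_one, dirichletKernel, dirichletKernel, Nat.add_sub_cancel]
  ring

/-! ### The upper bound by linear programming duality -/

namespace feasible

variable {N p : ℕ} {x : ℕ → ℝ}

lemma nonneg (hx : feasible N p x) {l : ℕ} (hl : l ∈ Icc 1 (N - 1)) : 0 ≤ x l := by
  rcases hx.1 l hl with h | h <;> simp [h]

lemma le_one (hx : feasible N p x) {l : ℕ} (hl : l ∈ Icc 1 (N - 1)) : x l ≤ 1 := by
  rcases hx.1 l hl with h | h <;> simp [h]

lemma sum_mul_weight_neg (hx : feasible N p x) (hp : p ∈ Icc 1 (N - 1)) :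
    ∑ l ∈ Icc 1 (N - 1), x l * weight N (p * l) < 0 := by
  refine lt_of_eq_of_lt (sum_congr rfl fun l _ ↦ ?_) (hx.2.2 p hp)
  rw [weight, circleCos, Nat.cast_mul, ← mul_assoc (2 * π)]
  ring

/- Weak linear programming duality: `lam` is the multiplier of the row `k = p`, and the positive
parts are those of the constraints `x l ≤ 1`. -/
lemma connectivity_le_of_dual {n g q : ℕ} {lam M : ℝ} (hx : feasible (n * g) (q * g) x)
    (hN : 2 ≤ n * g) (hp : q * g ∈ Icc 1 (n * g - 1)) (hq : q.Coprime n) (hlam : 0 ≤ lam)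
    (hM : M ≤ 1) (hdual : ∑ j ∈ range n, (1 - lam * weight n j)⁺ ≤ n * M) :
    (∑ l ∈ Icc 1 (n * g - 1), x l) / (((n * g : ℕ) : ℝ) - 1) ≤ M := by
  set f : ℕ → ℝ := fun j ↦ (1 - lam * weight n j)⁺
  have hg : g ≠ 0 := by
    rintro rfl
    omega
  have hf : Function.Periodic f n := fun j ↦ by simp only [f, weight_periodic n j]
  have hfq : Function.Periodic (fun l ↦ f (q * l)) n := fun l ↦ by
    simpa only [mul_add, Nat.cast_id] using hf.nat_mul q (q * l)
  have hweight (l : ℕ) : weight (n * g) (q * g * l) = weight n (q * l) := by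
    rw [mul_right_comm, weight_mul_mul hg]
  have hterm : ∀ l ∈ Icc 1 (n * g - 1), x l - lam * (x l * weight n (q * l)) ≤ f (q * l) := by
    intro l hl
    calc x l - lam * (x l * weight n (q * l)) = x l * (1 - lam * weight n (q * l)) := by ring
      _ ≤ x l * f (q * l) := mul_le_mul_of_nonneg_left (le_posPart _) (hx.nonneg hl)
      _ ≤ f (q * l) := mul_le_of_le_one_left (posPart_nonneg _) (hx.le_one hl)
  have hrow : lam * ∑ l ∈ Icc 1 (n * g - 1), x l * weight n (q * l) ≤ 0 := by
    have h := hx.sum_mul_weight_neg hp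
    simp only [hweight] at h
    exact mul_nonpos_of_nonneg_of_nonpos hlam h.le
  have hcycle : 1 + ∑ l ∈ Icc 1 (n * g - 1), f (q * l) ≤ n * g * M := by
    have hzero : f (q * 0) = 1 := by simp [f]
    rw [← hzero, ← sum_range_eq_add_sum_Icc (f := fun l ↦ f (q * l)) (by omega),
      sum_range_mul_of_periodic hfq, sum_range_coprime_mul hf hq, nsmul_eq_mul, mul_right_comm,
      mul_comm]
    gcongr
  have hsum := sum_le_sum hterm
  rw [sum_sub_distrib, ← mul_sum] at hsum
  have hN' : (2 : ℝ) ≤ ((n * g : ℕ) : ℝ) := by exact_mod_cast hN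
  rw [div_le_iff₀ (by linarith)]
  push_cast
  linarith

end feasible

/-- The value at `lam = 1 / (c ^ 2 - c)` of the dual linear program on the `n`-gon. The dual terms
change sign at the cosine `c`, and `K` is the last index for which the cosine is at least `c`. -/
noncomputable def dualBound (n K : ℕ) (c : ℝ) : ℝ :=
  (2 * K + 1 - 2 * (∑ j ∈ Icc 1 K, weight n j) / (c ^ 2 - c)) / n

section DualBound

variable {n K : ℕ} {c : ℝ}

lemma sq_sub_self_pos_of_neg (hc : c < 0) : 0 < c ^ 2 - c := by nlinarith

lemma sum_posPart_one_sub_mul_weight (hc : c < 0) (hK : 2 * (K + 1) ≤ n)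
    (hinside : c ≤ circleCos n K) (houtside : circleCos n (K + 1) ≤ c) :
    ∑ j ∈ range n, (1 - (c ^ 2 - c)⁻¹ * weight n j)⁺ = n * dualBound n K c := by
  have hpos := sq_sub_self_pos_of_neg hc
  have hin : ∀ j ∈ Icc 1 K,
      (1 - (c ^ 2 - c)⁻¹ * weight n j)⁺ = 1 - (c ^ 2 - c)⁻¹ * weight n j := by
    intro j hj
    rw [mem_Icc] at hj
    have hcj : c ≤ circleCos n j := hinside.trans (circleCos_anti hj.2 (by omega))
    have hw := neg_add_sq_le_neg_add_sq hcj (by linarith [circleCos_le_one n j])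
    rw [posPart_eq_self, sub_nonneg, inv_mul_le_one₀ hpos, weight]
    linarith
  have hout : ∀ j, K < j → 2 * j ≤ n → (1 - (c ^ 2 - c)⁻¹ * weight n j)⁺ = 0 := by
    intro j hj hjn
    have hcj : circleCos n j ≤ c := (circleCos_anti hj hjn).trans houtside
    have hw := neg_add_sq_le_neg_add_sq hcj (by linarith)
    rw [posPart_eq_zero, sub_nonpos, one_le_inv_mul₀ hpos, weight]
    linarith
  rw [sum_range_of_reflect (K := K) (by omega), sum_congr rfl hin]
  · have hn : (n : ℝ) ≠ 0 := by
      norm_cast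
      omega
    have hone : (1 : ℝ)⁺ = 1 := posPart_eq_self.2 zero_le_one
    simp only [weight_zero_right, mul_zero, sub_zero, hone, sum_sub_distrib, sum_const,
      Nat.card_Icc, ← mul_sum, nsmul_eq_mul, dualBound]
    push_cast
    field_simp
    ring
  · intro j hj
    rw [mem_Icc] at hj
    rw [weight_sub (by omega)]
  · intro j hj
    rw [mem_Ioo] at hj
    rcases le_total (2 * j) n with hjn | hjn
    · exact hout j hj.1 hjn
    · rw [← weight_sub (by omega)]
      exact hout (n - j) (by omega) (by omega)

lemma feasible.connectivity_le_of_dualBound_le {g q : ℕ} {x : ℕ → ℝ} {M : ℝ}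
    (hx : feasible (n * g) (q * g) x) (hN : 2 ≤ n * g) (hp : q * g ∈ Icc 1 (n * g - 1))
    (hq : q.Coprime n) (hc : c < 0) (hK : 2 * (K + 1) ≤ n) (hinside : c ≤ circleCos n K)
    (houtside : circleCos n (K + 1) ≤ c) (hM : M ≤ 1) (hbound : dualBound n K c ≤ M) :
    (∑ l ∈ Icc 1 (n * g - 1), x l) / (((n * g : ℕ) : ℝ) - 1) ≤ M := by
  refine hx.connectivity_le_of_dual hN hp hq (inv_nonneg.2 (sq_sub_self_pos_of_neg hc).le) hM ?_
  rw [sum_posPart_one_sub_mul_weight hc hK hinside houtside]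
  gcongr

end DualBound

/-! ### Numerical bounds for small polygons -/

/-- The Taylor polynomial of the cosine with `M` nonzero terms, over an arbitrary field so that it
can be evaluated over `ℚ` and compared with the cosine over `ℝ`. -/
def cosTaylor {𝕜 : Type*} [Field 𝕜] (M : ℕ) (x : 𝕜) : 𝕜 :=
  ∑ m ∈ range M, (-1) ^ m * x ^ (2 * m) / (2 * m).factorial

lemma cosTaylor_ratCast (M : ℕ) (q : ℚ) : ((cosTaylor M q : ℚ) : ℝ) = cosTaylor M (q : ℝ) := by
  push_cast [cosTaylor]
  rfl

lemma re_sum_range_mul_I_pow_div_factorial (x : ℝ) (M : ℕ) :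
    (∑ m ∈ range (2 * M), ((x : ℂ) * Complex.I) ^ m / (m.factorial : ℂ)).re = cosTaylor M x := by
  have heven (m : ℕ) : (((x : ℂ) * Complex.I) ^ (2 * m) / ((2 * m).factorial : ℂ)).re
      = (-1) ^ m * x ^ (2 * m) / (2 * m).factorial := by
    rw [mul_pow, pow_mul Complex.I, Complex.I_sq, mul_comm]
    exact_mod_cast Complex.ofReal_re _
  have hodd (m : ℕ) :
      (((x : ℂ) * Complex.I) ^ (2 * m + 1) / ((2 * m + 1).factorial : ℂ)).re = 0 := by
    rw [← Complex.ofReal_natCast, Complex.div_ofReal_re, mul_pow, pow_succ Complex.I,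
      pow_mul Complex.I, Complex.I_sq, ← Complex.ofReal_pow, Complex.re_ofReal_mul]
    rcases neg_one_pow_eq_or ℂ m with h | h <;> simp [h]
  rw [cosTaylor]
  induction M with
  | zero => simp
  | succ M ih =>
    rw [show 2 * (M + 1) = 2 * M + 1 + 1 by ring, sum_range_succ, sum_range_succ, sum_range_succ,
      Complex.add_re, Complex.add_re, ih, heven, hodd, add_zero]

lemma abs_cos_sub_cosTaylor_le {x : ℝ} {M : ℕ} (hx : |x| / (2 * M + 1) ≤ 1 / 2) :
    |cos x - cosTaylor M x| ≤ |x| ^ (2 * M) / (2 * M).factorial * 2 := by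
  have hnorm : ‖(x : ℂ) * Complex.I‖ = |x| := by simp
  have hexp := Complex.exp_bound' (x := (x : ℂ) * Complex.I) (n := 2 * M) (by
    rw [hnorm]
    push_cast
    exact hx)
  have hre := (Complex.abs_re_le_norm _).trans hexp
  rwa [Complex.sub_re, re_sum_range_mul_I_pow_div_factorial, Complex.exp_ofReal_mul_I_re,
    hnorm] at hre

/-- A rational approximation of `circleCos n j`. -/
def cosApprox (n j : ℕ) : ℚ := cosTaylor 12 (2 * (314159265359 / 10 ^ 11) * j / n)

/-- A rational approximation of `weight n j`. -/
def weightApprox (n j : ℕ) : ℚ := -cosApprox n j + cosApprox n j ^ 2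

lemma abs_circleCos_sub_cosApprox_le {n j : ℕ} (hj : 2 * j ≤ n) :
    |circleCos n j - cosApprox n j| ≤ 1 / 10 ^ 11 := by
  set t : ℝ := 2 * j / n
  have ht : t ≤ 1 := div_le_one_of_le₀ (by exact_mod_cast hj) (by positivity)
  have ht' : |t| = t := abs_of_nonneg (by positivity)
  set π' : ℝ := 314159265359 / 10 ^ 11
  have hcircle : circleCos n j = cos (π * t) := by
    rw [circleCos]
    congr 1
    ring
  have happrox : (cosApprox n j : ℝ) = cosTaylor 12 (π' * t) := by
    rw [cosApprox, cosTaylor_ratCast]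
    push_cast
    congr 1
    ring
  have hpi : |π * t - π' * t| ≤ 1 / 10 ^ 12 := by
    rw [← sub_mul, abs_mul, ht']
    refine (mul_le_of_le_one_right (abs_nonneg _) ht).trans ?_
    rw [abs_le]
    constructor <;> linarith [pi_gt_d20, pi_lt_d20]
  have hsmall : |π' * t| ≤ 3.15 := by
    rw [abs_mul, ht']
    exact (mul_le_of_le_one_right (abs_nonneg _) ht).trans (by norm_num [π'])
  have htaylor : |cos (π' * t) - cosTaylor 12 (π' * t)| ≤ 1 / 10 ^ 11 - 1 / 10 ^ 12 := by
    refine (abs_cos_sub_cosTaylor_le ?_).trans ?_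
    · rw [div_le_iff₀ (by positivity)]
      norm_num
      linarith
    · calc |π' * t| ^ (2 * 12) / (2 * 12).factorial * 2
          ≤ 3.15 ^ (2 * 12) / (2 * 12).factorial * 2 := by gcongr
        _ ≤ 1 / 10 ^ 11 - 1 / 10 ^ 12 := by norm_num [Nat.factorial]
  rw [hcircle, happrox]
  calc |cos (π * t) - cosTaylor 12 (π' * t)|
      ≤ |cos (π * t) - cos (π' * t)| + |cos (π' * t) - cosTaylor 12 (π' * t)| := abs_sub_le ..
    _ ≤ 1 / 10 ^ 12 + (1 / 10 ^ 11 - 1 / 10 ^ 12) :=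
        add_le_add ((abs_cos_sub_cos_le _ _).trans hpi) htaylor
    _ = 1 / 10 ^ 11 := by ring

lemma abs_weight_sub_weightApprox_le {n j : ℕ} (hj : 2 * j ≤ n) :
    |weight n j - weightApprox n j| ≤ 1 / 10 ^ 10 := by
  have h := abs_circleCos_sub_cosApprox_le hj
  have h' := abs_le.1 h
  have hfactor : |circleCos n j + cosApprox n j - 1| ≤ 4 := by
    rw [abs_le]
    constructor <;> linarith [neg_one_le_circleCos n j, circleCos_le_one n j]
  calc |weight n j - weightApprox n j|
      = |circleCos n j - cosApprox n j| * |circleCos n j + cosApprox n j - 1| := by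
        rw [← abs_mul, weight, weightApprox]
        push_cast
        ring_nf
    _ ≤ 1 / 10 ^ 11 * 4 := by gcongr
    _ ≤ 1 / 10 ^ 10 := by norm_num

/-- Up to a positive factor, the amount by which `dualBound n K (circleCos n (K + 1))` exceeds `μ`.
The function `w` is either `weight n` or its rational approximation. -/
def cutoffDefect {𝕜 : Type*} [Field 𝕜] (w : ℕ → 𝕜) (n K : ℕ) (μ : 𝕜) : 𝕜 :=
  (2 * K + 1 - n * μ) * w (K + 1) - 2 * ∑ j ∈ Icc 1 K, w j

lemma cutoffDefect_weight {n K : ℕ} (hc : circleCos n (K + 1) < 0) (hn : 0 < n) (μ : ℝ) :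
    cutoffDefect (weight n) n K μ =
      n * weight n (K + 1) * (dualBound n K (circleCos n (K + 1)) - μ) := by
  have hw := weight_pos_of_circleCos_neg hc
  have hden : circleCos n (K + 1) ^ 2 - circleCos n (K + 1) = weight n (K + 1) := by
    rw [weight]
    ring
  rw [dualBound, hden, cutoffDefect]
  field_simp
  ring

lemma abs_cutoffDefect_sub_le {w v : ℕ → ℝ} {n K : ℕ} {μ ε : ℝ}
    (h : ∀ j ∈ Icc 1 (K + 1), |w j - v j| ≤ ε) :
    |cutoffDefect w n K μ - cutoffDefect v n K μ| ≤ (|2 * K + 1 - n * μ| + 2 * K) * ε := by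
  have hsum : |∑ j ∈ Icc 1 K, (w j - v j)| ≤ K * ε := by
    calc |∑ j ∈ Icc 1 K, (w j - v j)| ≤ ∑ j ∈ Icc 1 K, |w j - v j| := abs_sum_le_sum_abs _ _
      _ ≤ ∑ _j ∈ Icc 1 K, ε :=
        sum_le_sum fun j hj ↦ h j (Icc_subset_Icc_right K.le_succ hj)
      _ = K * ε := by simp
  calc |cutoffDefect w n K μ - cutoffDefect v n K μ|
      = |(2 * K + 1 - n * μ) * (w (K + 1) - v (K + 1)) - 2 * ∑ j ∈ Icc 1 K, (w j - v j)| := by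
        rw [cutoffDefect, cutoffDefect, sum_sub_distrib]
        ring_nf
    _ ≤ |2 * K + 1 - n * μ| * |w (K + 1) - v (K + 1)| + 2 * |∑ j ∈ Icc 1 K, (w j - v j)| := by
        refine (abs_sub _ _).trans_eq ?_
        rw [abs_mul, abs_mul, abs_two]
    _ ≤ |2 * K + 1 - n * μ| * ε + 2 * (K * ε) := by
        gcongr
        exact h _ (by simp)
    _ = (|2 * K + 1 - n * μ| + 2 * K) * ε := by ring

lemma abs_cutoffDefect_weight_sub_le {n K : ℕ} {μ : ℚ} (hK : 2 * (K + 1) ≤ n) (hn : n ≤ 30)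
    (hμ : 0 ≤ μ) (hμ' : μ ≤ 1) :
    |cutoffDefect (weight n) n K μ - (cutoffDefect (weightApprox n) n K μ : ℚ)| ≤ 1 / 10 ^ 8 := by
  have hcast : ((cutoffDefect (weightApprox n) n K μ : ℚ) : ℝ)
      = cutoffDefect (fun j ↦ (weightApprox n j : ℝ)) n K μ := by
    push_cast [cutoffDefect]
    rfl
  have hK' : (2 * K + 2 : ℝ) ≤ n := by exact_mod_cast (by omega : 2 * K + 2 ≤ n)
  have hn' : (n : ℝ) ≤ 30 := by exact_mod_cast hn
  have hnμ : n * (μ : ℝ) ≤ n := mul_le_of_le_one_right (by positivity) (by exact_mod_cast hμ')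
  have hnμ' : 0 ≤ n * (μ : ℝ) := mul_nonneg (by positivity) (by exact_mod_cast hμ)
  have hslope : |2 * K + 1 - n * (μ : ℝ)| ≤ 30 := by
    rw [abs_le]
    constructor <;> linarith [(by positivity : (0 : ℝ) ≤ K)]
  rw [hcast]
  refine (abs_cutoffDefect_sub_le fun j hj ↦ abs_weight_sub_weightApprox_le ?_).trans ?_
  · rw [mem_Icc] at hj
    omega
  · calc (|2 * K + 1 - n * (μ : ℝ)| + 2 * K) * (1 / 10 ^ 10)
        ≤ (30 + 30) * (1 / 10 ^ 10) := by
          gcongr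
          linarith
      _ ≤ 1 / 10 ^ 8 := by norm_num

section NumericalBounds

variable {n K : ℕ} {μ : ℚ}

lemma dualBound_circleCos_lt (hK : 2 * (K + 1) ≤ n) (hK' : n < 4 * (K + 1)) (hn : n ≤ 30)
    (hμ : 0 ≤ μ) (hμ' : μ ≤ 1) (h : cutoffDefect (weightApprox n) n K μ ≤ -0.000001) :
    dualBound n K (circleCos n (K + 1)) < μ := by
  have hc := circleCos_neg hK' hK
  have hpos : 0 < n * weight n (K + 1) :=
    mul_pos (by exact_mod_cast (by omega : 0 < n)) (weight_pos_of_circleCos_neg hc)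
  have happrox : ((cutoffDefect (weightApprox n) n K μ : ℚ) : ℝ) ≤ (-0.000001 : ℚ) := by
    exact_mod_cast h
  have herror := abs_le.1 (abs_cutoffDefect_weight_sub_le hK hn hμ hμ')
  have hneg : cutoffDefect (weight n) n K μ < 0 := by
    norm_num1 at happrox herror
    linarith
  rw [cutoffDefect_weight hc (by omega)] at hneg
  exact sub_neg.1 (neg_of_mul_neg_right hneg hpos.le)

lemma lt_dualBound_circleCos (hK : 2 * (K + 1) ≤ n) (hK' : n < 4 * (K + 1)) (hn : n ≤ 30)
    (hμ : 0 ≤ μ) (hμ' : μ ≤ 1) (h : 0.000001 ≤ cutoffDefect (weightApprox n) n K μ) :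
    μ < dualBound n K (circleCos n (K + 1)) := by
  have hc := circleCos_neg hK' hK
  have hpos : 0 < n * weight n (K + 1) :=
    mul_pos (by exact_mod_cast (by omega : 0 < n)) (weight_pos_of_circleCos_neg hc)
  have happrox : ((0.000001 : ℚ) : ℝ) ≤ (cutoffDefect (weightApprox n) n K μ : ℚ) := by
    exact_mod_cast h
  have herror := abs_le.1 (abs_cutoffDefect_weight_sub_le hK hn hμ hμ')
  have hdefect : 0 < cutoffDefect (weight n) n K μ := by
    norm_num1 at happrox herror
    linarith
  rw [cutoffDefect_weight hc (by omega)] at hdefect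
  exact sub_pos.1 (pos_of_mul_pos_right hdefect hpos.le)

end NumericalBounds

lemma dualBound_lt_of_lt_thirty {n : ℕ} (hn : 2 ≤ n) (hn' : n < 30) (h4 : n ≠ 4) (h19 : n ≠ 19) :
    dualBound n ((n - 2) / 3) (circleCos n ((n - 2) / 3 + 1)) < 0.683875 := by
  have happrox : ∀ n ∈ Icc 2 29, n ≠ 4 → n ≠ 19 →
      cutoffDefect (weightApprox n) n ((n - 2) / 3) 0.683875 ≤ -0.000001 := by
    decide +kernel
  exact (dualBound_circleCos_lt (by omega) (by omega) hn'.le (by norm_num) (by norm_num)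
    (happrox n (by grind) h4 h19)).trans_eq (by norm_num)

lemma dualBound_nineteen_mem_Ioo :
    dualBound 19 5 (circleCos 19 6) ∈ Set.Ioo (0.683875 : ℝ) 0.683876 := by
  have hlower : 0.000001 ≤ cutoffDefect (weightApprox 19) 19 5 0.683875 := by decide +kernel
  have hupper : cutoffDefect (weightApprox 19) 19 5 0.683876 ≤ -0.000001 := by decide +kernel
  exact ⟨(lt_dualBound_circleCos (by norm_num) (by norm_num) (by norm_num) (by norm_num)
      (by norm_num) hlower).trans_eq' (by norm_num),
    (dualBound_circleCos_lt (by norm_num) (by norm_num) (by norm_num) (by norm_num)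
      (by norm_num) hupper).trans_eq (by norm_num)⟩

/-! ### The dual bound for large polygons -/

/-- The scaling limit of the dual bound at `c = -1/2`: replacing `sin (π / n)` and `sin (2π / n)`
by their arguments turns `π * dualBound n K (-1/2)` into its value at `(2K + 1)π / n`. -/
noncomputable def dualBoundLimit (φ : ℝ) : ℝ := φ / 3 + 4 / 3 * sin φ - sin (2 * φ) / 3

lemma hasDerivAt_dualBoundLimit (φ : ℝ) :
    HasDerivAt dualBoundLimit ((2 * cos φ + 1) * (3 - 2 * cos φ) / 3) φ := by
  have h := (((hasDerivAt_id φ).div_const 3).add ((hasDerivAt_sin φ).const_mul (4 / 3))).sub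
    (((hasDerivAt_id φ).const_mul 2).sin.div_const 3)
  refine h.congr_deriv ?_
  simp only [id, cos_two_mul]
  ring

lemma dualBoundLimit_two_pi_div_three : dualBoundLimit (2 * π / 3) = 2 * π / 9 + 5 * √3 / 6 := by
  have hsin : sin (2 * π / 3) = √3 / 2 := by
    rw [show 2 * π / 3 = π - π / 3 by ring, sin_pi_sub, sin_pi_div_three]
  rw [dualBoundLimit, sin_two_mul, hsin, cos_two_pi_div_three]
  ring

lemma dualBoundLimit_le {φ : ℝ} (hφ : φ ∈ Set.Ioo 0 π) :
    dualBoundLimit φ ≤ 2 * π / 9 + 5 * √3 / 6 := by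
  have hpi := pi_pos
  have hdiff : Differentiable ℝ dualBoundLimit := fun φ ↦
    (hasDerivAt_dualBoundLimit φ).differentiableAt
  rw [← dualBoundLimit_two_pi_div_three]
  refine isMaxOn_Ioo_of_deriv hdiff.continuous.continuousAt hdiff.differentiableOn
    hdiff.differentiableOn (fun θ hθ ↦ ?_) (fun θ hθ ↦ ?_) hφ
  · have hcos := cos_le_cos_of_nonneg_of_le_pi hθ.1.le (by linarith) hθ.2.le
    rw [cos_two_pi_div_three] at hcos
    rw [(hasDerivAt_dualBoundLimit θ).deriv]
    have := cos_le_one θ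
    have : 0 ≤ (2 * cos θ + 1) * (3 - 2 * cos θ) := mul_nonneg (by linarith) (by linarith)
    positivity
  · have hcos := cos_le_cos_of_nonneg_of_le_pi (by positivity) hθ.2.le hθ.1.le
    rw [cos_two_pi_div_three] at hcos
    rw [(hasDerivAt_dualBoundLimit θ).deriv]
    have := mul_nonpos_of_nonpos_of_nonneg (by linarith : 2 * cos θ + 1 ≤ 0)
      (by linarith : 0 ≤ 3 - 2 * cos θ)
    linarith

lemma abs_mul_sub_sin_mul_le {u A : ℝ} (hu : 0 < u) (hu' : u ≤ 1) (hA : |sin u * A| ≤ 1) :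
    |u * A - sin u * A| ≤ u ^ 2 / 5 := by
  have hcube := sin_ge_sub_cube hu.le
  have hsin : 5 / 6 * u ≤ sin u := by linarith [pow_le_of_le_one hu.le hu' three_ne_zero]
  have hA' : 5 / 6 * u * |A| ≤ 1 := by
    rw [abs_mul, abs_of_nonneg (by linarith)] at hA
    exact (mul_le_mul_of_nonneg_right hsin (abs_nonneg A)).trans hA
  calc |u * A - sin u * A| = (u - sin u) * |A| := by
        rw [← sub_mul, abs_mul, abs_of_nonneg (sub_nonneg.2 (sin_le hu.le))]
    _ ≤ u ^ 3 / 6 * |A| := by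
        gcongr
        linarith
    _ = u ^ 2 / 5 * (5 / 6 * u * |A|) := by ring
    _ ≤ u ^ 2 / 5 := mul_le_of_le_one_right (by positivity) hA'

lemma pi_mul_dualBound_le {n K : ℕ} (hn : 7 ≤ n) (hK : 2 * K + 1 < n) :
    π * dualBound n K (-1 / 2) ≤ 2 * π / 9 + 5 * √3 / 6 + 8 / 15 * (π / n) ^ 2 := by
  have hpi := pi_pos
  have hn' : (7 : ℝ) ≤ n := by exact_mod_cast hn
  have hK' : (2 * K + 1 : ℝ) < n := by exact_mod_cast hK
  set y : ℝ := π / n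
  have hy : 0 < y := by positivity
  have hny : n * y = π := by
    simp only [y]
    field_simp
  have hy' : 2 * y ≤ 1 := by nlinarith [pi_lt_d2]
  have hsin_one : sin y * dirichletKernel K n 1 = sin ((2 * K + 1) * y) := by
    simpa [y] using sin_mul_dirichletKernel K n 1
  have hsin_two : sin (2 * y) * dirichletKernel K n 2 = sin (2 * ((2 * K + 1) * y)) := by
    have h := sin_mul_dirichletKernel K n 2
    rw [show π * (2 : ℕ) / n = 2 * y by push_cast; ring] at h
    rw [h]
    ring_nf
  have hone := (abs_le.1 (abs_mul_sub_sin_mul_le hy (by linarith)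
    (hsin_one ▸ abs_sin_le_one _))).2
  have htwo := (abs_le.1 (abs_mul_sub_sin_mul_le (by positivity) hy'
    (hsin_two ▸ abs_sin_le_one _))).1
  have hbound : π * dualBound n K (-1 / 2) = (2 * K + 1) * y / 3
      + 4 / 3 * (y * dirichletKernel K n 1) - 2 * y * dirichletKernel K n 2 / 3 := by
    rw [dualBound, two_mul_sum_weight]
    simp only [y]
    field_simp
    ring
  have hlimit := dualBoundLimit_le (φ := (2 * K + 1) * y)
    ⟨by positivity, by nlinarith⟩
  rw [dualBoundLimit] at hlimit
  linarith

lemma dualBound_neg_half_lt {n K : ℕ} (hn : 30 ≤ n) (hK : 2 * K + 1 < n) :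
    dualBound n K (-1 / 2) < 0.683875 := by
  have hpi := pi_gt_d4
  have hpi' := pi_lt_d4
  have hn' : (30 : ℝ) ≤ n := by exact_mod_cast hn
  have hsqrt : √3 < 1.7321 := by
    rw [sqrt_lt' (by norm_num)]
    norm_num
  have hy : π / n ≤ 0.10472 := by
    rw [div_le_iff₀ (by positivity)]
    linarith
  have hsq : (π / n) ^ 2 ≤ 0.10472 ^ 2 := by gcongr
  have hbound := pi_mul_dualBound_le (by omega) hK
  nlinarith

lemma exists_dualBound_le {n : ℕ} (hn : 2 ≤ n) (h4 : n ≠ 4) :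
    ∃ (K : ℕ) (c : ℝ), c < 0 ∧ 2 * (K + 1) ≤ n ∧ c ≤ circleCos n K ∧ circleCos n (K + 1) ≤ c ∧
      dualBound n K c ≤ dualBound 19 5 (circleCos 19 6) := by
  have hnineteen := dualBound_nineteen_mem_Ioo.1
  rcases eq_or_ne n 19 with rfl | h19
  · exact ⟨5, circleCos 19 6, circleCos_neg (by norm_num) (by norm_num), by norm_num,
      circleCos_anti (by norm_num) (by norm_num), le_rfl, le_rfl⟩
  rcases lt_or_ge n 30 with hlt | hge
  · exact ⟨(n - 2) / 3, circleCos n ((n - 2) / 3 + 1), circleCos_neg (by omega) (by omega),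
      by omega, circleCos_anti (by omega) (by omega), le_rfl,
      ((dualBound_lt_of_lt_thirty hn hlt h4 h19).trans hnineteen).le⟩
  · exact ⟨n / 3, -1 / 2, by norm_num, by omega, neg_half_le_circleCos (by omega),
      circleCos_le_neg_half (by omega) (by omega) (by omega),
      ((dualBound_neg_half_lt hge (by omega)).trans hnineteen).le⟩

namespace feasible

lemma ne_four {n g q : ℕ} {x : ℕ → ℝ} (hx : feasible (n * g) (q * g) x)
    (hp : q * g ∈ Icc 1 (n * g - 1)) : n ≠ 4 := by
  rintro rfl
  have hg : g ≠ 0 := by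
    rintro rfl
    simp at hp
  refine (hx.sum_mul_weight_neg hp).not_ge (sum_nonneg fun l hl ↦ ?_)
  rw [mul_right_comm, weight_mul_mul hg]
  exact mul_nonneg (hx.nonneg hl) (weight_four_nonneg _)

lemma connectivity_le {N p : ℕ} {x : ℕ → ℝ} (hx : feasible N p x) (hp : p ∈ Icc 1 (N - 1)) :
    (∑ l ∈ Icc 1 (N - 1), x l) / ((N : ℝ) - 1) ≤ dualBound 19 5 (circleCos 19 6) := by
  have hpN := mem_Icc.1 hp
  obtain ⟨q, n, hqn, hq, hn⟩ := Nat.exists_coprime p N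
  generalize p.gcd N = g at hq hn
  subst hq hn
  have hn2 : 2 ≤ n := by
    have hlt : q < n := Nat.lt_of_mul_lt_mul_right (a := g) (by omega)
    have hq : q ≠ 0 := by
      rintro rfl
      omega
    omega
  obtain ⟨K, c, hc, hK, hinside, houtside, hbound⟩ := exists_dualBound_le hn2 (hx.ne_four hp)
  exact hx.connectivity_le_of_dualBound_le (by omega) hp hqn hc hK hinside houtside
    (dualBound_nineteen_mem_Ioo.2.le.trans (by norm_num)) hbound

end feasible

/-! ### Feasible vectors close to the bound -/

lemma one_lt_sin_mul_dirichletKernel_nineteen :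
    1 < sin (2 * π / 19) * dirichletKernel 6 19 1 := by
  have hpi := pi_pos
  have hcos : √2 / 2 < cos (π / 19) := by
    rw [← cos_pi_div_four]
    exact cos_lt_cos_of_nonneg_of_le_pi (by positivity) (by linarith) (by linarith)
  have hsin : √2 / 2 < sin (13 * (π / 19)) := by
    rw [← sin_pi_div_four, show 13 * (π / 19) = π - 6 * π / 19 by ring, sin_pi_sub]
    exact sin_lt_sin_of_lt_of_le_pi_div_two (by linarith) (by linarith) (by linarith)
  have hkernel : sin (π / 19) * dirichletKernel 6 19 1 = sin (13 * (π / 19)) := by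
    have h := sin_mul_dirichletKernel 6 19 1
    norm_num at h
    exact h
  have hdouble : sin (2 * π / 19) * dirichletKernel 6 19 1
      = 2 * (cos (π / 19) * sin (13 * (π / 19))) := by
    rw [← hkernel, mul_div_assoc, sin_two_mul]
    ring
  have hsqrt : √2 / 2 * (√2 / 2) = 1 / 2 := by
    rw [div_mul_div_comm, mul_self_sqrt zero_le_two]
    norm_num
  rw [hdouble]
  linarith [mul_lt_mul'' hcos hsin (by positivity) (by positivity)]

lemma one_lt_dirichletKernel_nineteen : 1 < dirichletKernel 6 19 1 := by
  have h := one_lt_sin_mul_dirichletKernel_nineteen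
  have hpi := pi_pos
  have hsin : 0 < sin (2 * π / 19) := sin_pos_of_pos_of_lt_pi (by positivity) (by linarith)
  have hle := sin_le_one (2 * π / 19)
  by_contra! hD
  nlinarith

lemma dirichletKernel_nineteen_lt {j : ℕ} (hj : 2 ≤ j) (hj' : j ≤ 17) :
    dirichletKernel 6 19 j < dirichletKernel 6 19 1 := by
  have hj2 : (2 : ℝ) ≤ j := by exact_mod_cast hj
  have hj17 : (j : ℝ) ≤ 17 := by exact_mod_cast hj'
  have hpi := pi_pos
  have hpos : 0 < sin (2 * π / 19) := sin_pos_of_pos_of_lt_pi (by positivity) (by linarith)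
  have hsin : sin (2 * π / 19) ≤ sin (π * j / (19 : ℕ)) := by
    refine sin_le_sin_of_mem_Icc_pi_sub (by positivity) ⟨?_, ?_⟩ <;>
      push_cast <;> nlinarith
  refine lt_of_mul_lt_mul_left ?_ (hpos.le.trans hsin)
  calc sin (π * j / (19 : ℕ)) * dirichletKernel 6 19 j ≤ 1 :=
        (sin_mul_dirichletKernel 6 19 j).trans_le (sin_le_one _)
    _ < sin (2 * π / 19) * dirichletKernel 6 19 1 := one_lt_sin_mul_dirichletKernel_nineteen
    _ ≤ sin (π * j / (19 : ℕ)) * dirichletKernel 6 19 1 := by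
        gcongr
        linarith [one_lt_dirichletKernel_nineteen]

lemma sum_circleCos_nineteen_neg {k : ℕ} (hk : 2 ≤ k) (hk' : k ≤ 17) :
    ∑ r ∈ Icc 1 6, circleCos 19 r * (-1 + circleCos 19 (k * r)) < 0 := by
  obtain ⟨j, rfl⟩ := Nat.exists_eq_add_of_le' (show 1 ≤ k by omega)
  have h := four_mul_sum_circleCos_mul 19 6 j
  rcases eq_or_ne j 1 with rfl | hj
  · linarith [dirichletKernel_nineteen_lt (j := 3) (by norm_num) (by norm_num)]
  · have hlower := dirichletKernel_nineteen_lt (j := j) (by omega) (by omega)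
    have hupper : dirichletKernel 6 19 (j + 2) ≤ dirichletKernel 6 19 1 := by
      rcases eq_or_ne j 16 with rfl | hj
      · exact (dirichletKernel_sub_one (by norm_num) 6).le
      · exact (dirichletKernel_nineteen_lt (by omega) (by omega)).le
    linarith

/-- The 0/1-vector on the `19 * g` points that takes all residues `r` modulo 19 with `|r| ≤ 5`,
and each of the residues `±6` in `m` of the `g` blocks of length 19, placed symmetrically. -/
noncomputable def extremal (g m l : ℕ) : ℝ :=
  if l % 19 ≤ 5 ∨ 14 ≤ l % 19 ∨ (l % 19 = 6 ∧ l / 19 < m) ∨ (l % 19 = 13 ∧ g ≤ l / 19 + m)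
  then 1 else 0

section Extremal

variable {g m : ℕ}

lemma extremal_eq_zero_or_one (g m l : ℕ) : extremal g m l = 0 ∨ extremal g m l = 1 := by
  rw [extremal]
  split_ifs <;> simp

lemma extremal_sub {l : ℕ} (hl : l ∈ Icc 1 (19 * g - 1)) :
    extremal g m (19 * g - l) = extremal g m l := by
  rw [mem_Icc] at hl
  rw [extremal, extremal]
  congr 1
  simp only [eq_iff_iff]
  omega

lemma extremal_block_of_le_five {r : ℕ} (hr : r ≤ 5) (a : ℕ) : extremal g m (19 * a + r) = 1 :=
  if_pos (by omega)

lemma extremal_block_six (a : ℕ) : extremal g m (19 * a + 6) = if a < m then 1 else 0 := by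
  rw [extremal]
  congr 1
  simp only [eq_iff_iff]
  omega

lemma extremal_block_of_mem_Ioo {r : ℕ} (hr : r ∈ Ioo 6 13) (a : ℕ) :
    extremal g m (19 * a + r) = 0 := by
  rw [mem_Ioo] at hr
  exact if_neg (by omega)

lemma sum_extremal_mul (hm : m ≤ g) {φ : ℕ → ℝ}
    (hφ : ∀ l ∈ Icc 1 (19 * g - 1), φ (19 * g - l) = φ l) :
    ∑ l ∈ range (19 * g), extremal g m l * φ l = ∑ a ∈ range g, φ (19 * a) +
      2 * (∑ r ∈ Icc 1 5, ∑ a ∈ range g, φ (19 * a + r) + ∑ a ∈ range m, φ (19 * a + 6)) := by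
  have hzero (a : ℕ) : extremal g m (19 * a) * φ (19 * a) = φ (19 * a) := by
    have h := extremal_block_of_le_five (g := g) (m := m) (Nat.zero_le 5) a
    rw [add_zero] at h
    rw [h, one_mul]
  have hfull : ∀ r ∈ Icc 1 5, ∑ a ∈ range g, extremal g m (19 * a + r) * φ (19 * a + r)
      = ∑ a ∈ range g, φ (19 * a + r) := fun r hr ↦ sum_congr rfl fun a _ ↦ by
    rw [extremal_block_of_le_five (mem_Icc.1 hr).2, one_mul]
  have hpartial : ∑ a ∈ range g, extremal g m (19 * a + 6) * φ (19 * a + 6)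
      = ∑ a ∈ range m, φ (19 * a + 6) := by
    have hfilter : (range g).filter (· < m) = range m := by
      ext a
      simp only [mem_filter, mem_range]
      omega
    simp only [extremal_block_six, ite_mul, one_mul, zero_mul]
    rw [← sum_filter, hfilter]
  rw [sum_range_mul_of_reflect (K := 6) (by norm_num), sum_Icc_succ_top (by norm_num),
    sum_congr rfl hfull, hpartial, sum_congr rfl fun a _ ↦ hzero a, nsmul_eq_mul, Nat.cast_ofNat]
  · intro l hl
    rw [extremal_sub hl, hφ l hl]
  · intro a r hr
    rw [extremal_block_of_mem_Ioo hr, zero_mul]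

lemma sum_extremal (hm : m ≤ g) (hg : 0 < g) :
    ∑ l ∈ Icc 1 (19 * g - 1), extremal g m l = 11 * g - 1 + 2 * m := by
  have hzero : extremal g m 0 = 1 := extremal_block_of_le_five (Nat.zero_le 5) 0
  have h := sum_extremal_mul (φ := fun _ ↦ 1) hm (by simp)
  simp only [mul_one] at h
  rw [sum_range_eq_add_sum_Icc (by omega), hzero] at h
  simp only [sum_const, card_range, nsmul_eq_mul, mul_one, Nat.card_Icc, Nat.add_one_sub_one,
    Nat.cast_ofNat] at h
  linarith

lemma extremal_row_eq (hm : m ≤ g) (hg : 0 < g) (k : ℕ) :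
    ∑ l ∈ Icc 1 (19 * g - 1), extremal g m l * cos (2 * π * g * l / (19 * g : ℕ)) *
        (-1 + cos (2 * π * k * l / (19 * g : ℕ))) =
      ∑ a ∈ range g, (-1 + circleCos (19 * g) (k * (19 * a))) +
      2 * (∑ r ∈ Icc 1 5, circleCos 19 r *
            ∑ a ∈ range g, (-1 + circleCos (19 * g) (k * (19 * a + r))) +
          circleCos 19 6 * ∑ a ∈ range m, (-1 + circleCos (19 * g) (k * (19 * a + 6)))) := by
  set φ : ℕ → ℝ := fun l ↦ circleCos 19 l * (-1 + circleCos (19 * g) (k * l))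
  have hterm (l : ℕ) : extremal g m l * cos (2 * π * g * l / (19 * g : ℕ)) *
      (-1 + cos (2 * π * k * l / (19 * g : ℕ))) = extremal g m l * φ l := by
    simp only [φ]
    rw [← circleCos_mul_mul hg.ne' 19 l, circleCos, circleCos]
    push_cast
    ring_nf
  have hφ : ∀ l ∈ Icc 1 (19 * g - 1), φ (19 * g - l) = φ l := fun l hl ↦ by
    have hl' : l ≤ 19 * g := by
      rw [mem_Icc] at hl
      omega
    simp only [φ]
    rw [circleCos_mul_sub hl', Nat.mul_sub, mul_comm k (19 * g), circleCos_mul_sub]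
    calc k * l ≤ k * (19 * g) := Nat.mul_le_mul_left k hl'
      _ = 19 * g * k := mul_comm _ _
  have hblock_zero (a : ℕ) : circleCos 19 (19 * a) = 1 := by
    simpa using circleCos_mul_add 19 a 0
  have hφ_zero : φ 0 = 0 := by simp [φ]
  have hsum := sum_extremal_mul hm hφ
  rw [sum_range_eq_add_sum_Icc (by omega), hφ_zero, mul_zero, zero_add] at hsum
  rw [sum_congr rfl fun l _ ↦ hterm l, hsum]
  simp only [φ, circleCos_mul_add, hblock_zero, one_mul, ← mul_sum]

lemma extremal_row_neg_of_not_dvd (hm : m ≤ g) (hg : 0 < g) {k : ℕ} (hk : ¬ g ∣ k) :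
    ∑ l ∈ Icc 1 (19 * g - 1), extremal g m l * cos (2 * π * g * l / (19 * g : ℕ)) *
        (-1 + cos (2 * π * k * l / (19 * g : ℕ))) < 0 := by
  have hsix : circleCos 19 6 < 0 := circleCos_neg (by norm_num) (by norm_num)
  have hblock (r : ℕ) : ∑ a ∈ range g, (-1 + circleCos (19 * g) (k * (19 * a + r))) = -g := by
    simp [sum_add_distrib, sum_circleCos_arithmetic_eq_zero (n := 19) (by norm_num) hk r]
  have hblock_zero : ∑ a ∈ range g, (-1 + circleCos (19 * g) (k * (19 * a))) = -g := by
    simpa using hblock 0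
  have hpartial : -2 * (g : ℝ) ≤ ∑ a ∈ range m, (-1 + circleCos (19 * g) (k * (19 * a + 6))) := by
    have h := card_nsmul_le_sum (range m)
      (fun a ↦ -1 + circleCos (19 * g) (k * (19 * a + 6))) (-2)
      fun a _ ↦ by linarith [neg_one_le_circleCos (19 * g) (k * (19 * a + 6))]
    rw [card_range, nsmul_eq_mul] at h
    have hm' : (m : ℝ) ≤ g := by exact_mod_cast hm
    linarith
  have hkernel : 0 < 2 * circleCos 19 6 + dirichletKernel 6 19 1 := by
    linarith [neg_half_le_circleCos (n := 19) (j := 6) (by norm_num),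
      one_lt_dirichletKernel_nineteen]
  have hg' : (0 : ℝ) < g := by exact_mod_cast hg
  rw [extremal_row_eq hm hg]
  simp only [hblock, hblock_zero, ← sum_mul]
  rw [dirichletKernel, sum_Icc_succ_top (by norm_num)] at hkernel
  simp only [one_mul] at hkernel
  nlinarith [mul_le_mul_of_nonpos_left hpartial hsix.le]

lemma extremal_reduced_row_neg (hm : m ≤ g) (hg : 0 < g)
    (hweight : g * ∑ r ∈ Icc 1 5, weight 19 r + m * weight 19 6 < 0) {k : ℕ} (hk : 1 ≤ k)
    (hk' : k ≤ 18) :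
    g * ∑ r ∈ Icc 1 5, circleCos 19 r * (-1 + circleCos 19 (k * r)) +
      m * (circleCos 19 6 * (-1 + circleCos 19 (k * 6))) < 0 := by
  by_cases hend : k = 1 ∨ k = 18
  · have hterm (r : ℕ) : circleCos 19 r * (-1 + circleCos 19 (k * r)) = weight 19 r := by
      have hkr : circleCos 19 (k * r) = circleCos 19 r := by
        rcases hend with rfl | rfl
        · rw [one_mul]
        · exact circleCos_mul_sub_one_mul (by norm_num) r
      rw [weight, hkr]
      ring
    simpa only [hterm] using hweight
  · have hsix : 0 ≤ circleCos 19 6 * (-1 + circleCos 19 (k * 6)) :=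
      mul_nonneg_of_nonpos_of_nonpos (circleCos_neg (by norm_num) (by norm_num)).le
        (by linarith [circleCos_le_one 19 (k * 6)])
    have hfull := sum_circleCos_nineteen_neg (k := k) (by omega) (by omega)
    rw [sum_Icc_succ_top (by norm_num)] at hfull
    calc g * ∑ r ∈ Icc 1 5, circleCos 19 r * (-1 + circleCos 19 (k * r)) +
          m * (circleCos 19 6 * (-1 + circleCos 19 (k * 6)))
        ≤ g * ∑ r ∈ Icc 1 5, circleCos 19 r * (-1 + circleCos 19 (k * r)) +
          g * (circleCos 19 6 * (-1 + circleCos 19 (k * 6))) := by gcongr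
      _ = g * (∑ r ∈ Icc 1 5, circleCos 19 r * (-1 + circleCos 19 (k * r)) +
          circleCos 19 6 * (-1 + circleCos 19 (k * 6))) := by ring
      _ < 0 := mul_neg_of_pos_of_neg (by exact_mod_cast hg) hfull

lemma extremal_row_neg_of_dvd (hm : m ≤ g) (hg : 0 < g)
    (hweight : g * ∑ r ∈ Icc 1 5, weight 19 r + m * weight 19 6 < 0) {k : ℕ} (hk : 1 ≤ k)
    (hk' : k ≤ 18) :
    ∑ l ∈ Icc 1 (19 * g - 1), extremal g m l * cos (2 * π * g * l / (19 * g : ℕ)) *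
        (-1 + cos (2 * π * ((k * g : ℕ) : ℝ) * l / (19 * g : ℕ))) < 0 := by
  have hblock (a r : ℕ) :
      circleCos (19 * g) (k * g * (19 * a + r)) = circleCos 19 (k * r) := by
    rw [mul_right_comm, circleCos_mul_mul hg.ne', mul_add, mul_left_comm, circleCos_mul_add]
  have hblock_zero (a : ℕ) : circleCos (19 * g) (k * g * (19 * a)) = 1 := by
    simpa using hblock a 0
  rw [extremal_row_eq hm hg]
  simp only [hblock, hblock_zero, neg_add_cancel, sum_const, card_range, nsmul_eq_mul, mul_zero,
    zero_add]
  have hreduced := extremal_reduced_row_neg hm hg hweight hk hk'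
  simp only [mul_left_comm _ (g : ℝ), ← mul_sum]
  linarith

lemma feasible_extremal (hm : m ≤ g) (hg : 0 < g)
    (hweight : g * ∑ r ∈ Icc 1 5, weight 19 r + m * weight 19 6 < 0) :
    feasible (19 * g) g (extremal g m) := by
  refine ⟨fun l _ ↦ extremal_eq_zero_or_one g m l, fun l hl ↦ (extremal_sub hl).symm,
    fun k hk ↦ ?_⟩
  rw [mem_Icc] at hk
  by_cases hdvd : g ∣ k
  · obtain ⟨k, rfl⟩ := hdvd
    rw [mul_comm g k] at hk ⊢
    refine extremal_row_neg_of_dvd hm hg hweight (Nat.pos_of_mul_pos_right hk.1) ?_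
    have hlt : k < 19 := Nat.lt_of_mul_lt_mul_right (a := g) (by omega)
    omega
  · exact extremal_row_neg_of_not_dvd hm hg hdvd

end Extremal

/-- The fraction of blocks in which `extremal` may take the residues `±6` without violating the
row `k = p`. -/
noncomputable def fillFraction : ℝ := -(∑ r ∈ Icc 1 5, weight 19 r) / weight 19 6

lemma weight_nineteen_six_pos : 0 < weight 19 6 :=
  weight_pos_of_circleCos_neg (circleCos_neg (by norm_num) (by norm_num))

lemma dualBound_nineteen_eq :
    dualBound 19 5 (circleCos 19 6) = (11 + 2 * fillFraction) / 19 := by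
  rw [dualBound, fillFraction, weight]
  push_cast
  ring

lemma fillFraction_mem_Ioo : fillFraction ∈ Set.Ioo 0 1 := by
  have h := dualBound_nineteen_mem_Ioo
  rw [dualBound_nineteen_eq] at h
  constructor <;> linarith [h.1, h.2]

lemma exists_feasible_connectivity_gt {b : ℝ} (hb : b < dualBound 19 5 (circleCos 19 6)) :
    ∃ (g : ℕ) (x : ℕ → ℝ), 0 < g ∧ feasible (19 * g) g x ∧
      b < (∑ l ∈ Icc 1 (19 * g - 1), x l) / (((19 * g : ℕ) : ℝ) - 1) := by
  rw [dualBound_nineteen_eq, lt_div_iff₀ (by norm_num)] at hb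
  obtain ⟨ht, ht'⟩ := fillFraction_mem_Ioo
  set t := fillFraction with ht_def
  obtain ⟨g, hg⟩ := exists_nat_gt ((3 - b) / (11 + 2 * t - b * 19))
  have hg' : (0 : ℝ) < g := lt_of_le_of_lt (div_nonneg (by linarith) (by linarith)) hg
  obtain ⟨m, hm⟩ := Nat.exists_eq_add_one_of_ne_zero (Nat.ceil_pos.2 (mul_pos ht hg')).ne'
  have hmt : (m : ℝ) < t * g := Nat.lt_ceil.1 (by omega)
  have htm : t * g ≤ m + 1 := (Nat.le_ceil _).trans_eq (by rw [hm]; push_cast; rfl)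
  have hmg : m ≤ g := by
    have : (m : ℝ) < g := hmt.trans_le (mul_le_of_le_one_left hg'.le ht'.le)
    exact_mod_cast this.le
  have hweight : g * ∑ r ∈ Icc 1 5, weight 19 r + m * weight 19 6 < 0 := by
    have hsum : ∑ r ∈ Icc 1 5, weight 19 r = -t * weight 19 6 := by
      rw [ht_def, fillFraction]
      field_simp [weight_nineteen_six_pos.ne']
    rw [hsum]
    nlinarith [weight_nineteen_six_pos]
  have hgpos : 0 < g := by exact_mod_cast hg'
  have hg1 : (1 : ℝ) ≤ g := by exact_mod_cast hgpos
  refine ⟨g, extremal g m, hgpos, feasible_extremal hmg hgpos hweight, ?_⟩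
  rw [div_lt_iff₀ (by linarith)] at hg
  rw [sum_extremal hmg hgpos, lt_div_iff₀ (by push_cast; linarith)]
  push_cast
  linarith

lemma dualBound_nineteen_eq_cos :
    dualBound 19 5 (circleCos 19 6) = 11 / 19 - (2 / 19) *
      (∑ l ∈ Icc (1 : ℕ) 5, (-cos (2 * π * l / 19) + cos (2 * π * l / 19) ^ 2)) /
      (-cos (12 * π / 19) + cos (12 * π / 19) ^ 2) := by
  have hsix : circleCos 19 6 = cos (12 * π / 19) := by
    rw [circleCos]
    congr 1
    push_cast
    ring
  rw [dualBound_nineteen_eq, fillFraction, weight, hsix]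
  simp only [weight, circleCos, Nat.cast_ofNat]
  ring

/-- Theorem 2 (supremum value of `μ^{(N,p)}`): the supremum of the connectivities of
feasible vectors, over all `N ≥ 2` and `1 ≤ p ≤ ⌊N/2⌋`, equals
`11/19 - (2/19) ⬝ (∑_{l=1}^{5} (-cos(2πl/19) + cos²(2πl/19))) / (-cos(12π/19) + cos²(12π/19))
 = 0.683875⋯`. -/
theorem sup_connectivity :
    sSup {μ : ℝ | ∃ (N p : ℕ) (x : ℕ → ℝ), 2 ≤ N ∧ 1 ≤ p ∧ p ≤ N / 2 ∧ feasible N p x ∧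
        μ = (∑ l ∈ Finset.Icc 1 (N - 1), x l) / ((N : ℝ) - 1)}
      = 11 / 19 - (2 / 19) *
          (∑ l ∈ Finset.Icc (1:ℕ) 5,
              (-Real.cos (2 * π * l / 19) + Real.cos (2 * π * l / 19) ^ 2)) /
          (-Real.cos (12 * π / 19) + Real.cos (12 * π / 19) ^ 2) ∧
    0.683875 ≤ (11 / 19 - (2 / 19) *
          (∑ l ∈ Finset.Icc (1:ℕ) 5,
              (-Real.cos (2 * π * l / 19) + Real.cos (2 * π * l / 19) ^ 2)) /
          (-Real.cos (12 * π / 19) + Real.cos (12 * π / 19) ^ 2) : ℝ) ∧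
    (11 / 19 - (2 / 19) *
          (∑ l ∈ Finset.Icc (1:ℕ) 5,
              (-Real.cos (2 * π * l / 19) + Real.cos (2 * π * l / 19) ^ 2)) /
          (-Real.cos (12 * π / 19) + Real.cos (12 * π / 19) ^ 2) : ℝ) < 0.683876 := by
  rw [← dualBound_nineteen_eq_cos]
  refine ⟨IsLUB.csSup_eq ⟨?_, fun B hB ↦ le_of_forall_lt fun b hb ↦ ?_⟩ ?_,
    dualBound_nineteen_mem_Ioo.1.le, dualBound_nineteen_mem_Ioo.2⟩
  · rintro μ ⟨N, p, x, hN, hp, hpN, hx, rfl⟩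
    exact hx.connectivity_le (mem_Icc.2 ⟨hp, by omega⟩)
  · obtain ⟨g, x, hg, hx, hlt⟩ := exists_feasible_connectivity_gt hb
    exact hlt.trans_le (hB ⟨19 * g, g, x, by omega, hg, by omega, hx, rfl⟩)
  · obtain ⟨g, x, hg, hx, -⟩ := exists_feasible_connectivity_gt (sub_one_lt _)
    exact ⟨_, 19 * g, g, x, by omega, hg, by omega, hx, rfl⟩
end

section
/- Let N ≥ 2 and 1 ≤ p ≤ ⌊N/2⌋ be integers, and define S^{(N,p)} = {l ∈ {1,…,N−1} : the fractional part of pl/N lies in [0,1/4] ∪ [3/4,1)}. Let x ∈ {0,1}^{N−1} satisfy x_l = x_{N−l} for all l and x_l = 1 for every l ∈ S^{(N,p)}. Then for every k ∈ {1,…,N−1} with N not dividing k − p and N not dividing k + p, one has ∑_{l=1}^{N−1} x_l·cos(2πpl/N)·(−1 + cos(2πkl/N)) ≤ 0. -/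
open Real Finset

/-!
If `x` is identically `1`, then `2 cos a cos b = cos (a + b) + cos (a - b)` and the orthogonality
of the cosines over `ℤ/N` show that the row sum is at most `0`. Lowering `x l` where
`cos (2πpl/N) ≤ 0` can only decrease the row sum, because there `x l` multiplies a product of two
nonpositive factors. The entries with `cos (2πpl/N) > 0` have `l ∈ S^{(N,p)}` and stay equal to `1`.
-/

lemma sin_pi_mul_int_div_ne_zero {N : ℕ} {m : ℤ} (hN : N ≠ 0) (hm : ¬ (N : ℤ) ∣ m) :
    sin (π * m / N) ≠ 0 := by
  rw [Ne, sin_eq_zero_iff]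
  rintro ⟨n, hn⟩
  have m_eq : (m : ℝ) = N * n := by
    field_simp at hn
    linarith
  exact hm ⟨n, mod_cast m_eq⟩

lemma sum_range_cos_two_pi_mul_div {N : ℕ} (hN : N ≠ 0) (m : ℤ) :
    ∑ l ∈ range N, cos (2 * π * m * l / N) = if (N : ℤ) ∣ m then (N : ℝ) else 0 := by
  split_ifs with hm
  · obtain ⟨n, rfl⟩ := hm
    have cos_eq_one (l : ℕ) : cos (2 * π * (N * n : ℤ) * l / N) = 1 := by
      rw [← cos_int_mul_two_pi (n * l)]
      congr 1
      push_cast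
      field_simp
    rw [sum_congr rfl fun l _ ↦ cos_eq_one l]
    simp
  · have sin_mul_sum := sin_mul_sum_cos N (2 * π * m / N) 0
    have sin_end : sin (N * (2 * π * m / N) / 2) = 0 :=
      sin_eq_zero_iff.mpr ⟨m, by field_simp⟩
    have half_angle : 2 * π * m / N / 2 = π * m / N := by ring
    rw [sin_end, zero_mul, half_angle] at sin_mul_sum
    have cos_sum_eq_zero :=
      (mul_eq_zero.mp sin_mul_sum).resolve_left (sin_pi_mul_int_div_ne_zero hN hm)
    rw [← cos_sum_eq_zero]
    exact sum_congr rfl fun l _ ↦ by congr 1; ring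

lemma sum_range_cos_mul_neg_one_add_cos {N : ℕ} {p k : ℤ} (hN : N ≠ 0)
    (hsub : ¬ (N : ℤ) ∣ k - p) (hadd : ¬ (N : ℤ) ∣ k + p) :
    ∑ l ∈ range N, cos (2 * π * p * l / N) * (-1 + cos (2 * π * k * l / N)) =
      if (N : ℤ) ∣ p then -(N : ℝ) else 0 := by
  have product_to_sum (l : ℕ) :
      cos (2 * π * p * l / N) * (-1 + cos (2 * π * k * l / N)) =
        (cos (2 * π * (k - p : ℤ) * l / N) + cos (2 * π * (k + p : ℤ) * l / N)) / 2 -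
          cos (2 * π * p * l / N) := by
    have angle_sub : 2 * π * (k - p : ℤ) * l / N =
        2 * π * k * l / N - 2 * π * p * l / N := by push_cast; ring
    have angle_add : 2 * π * (k + p : ℤ) * l / N =
        2 * π * k * l / N + 2 * π * p * l / N := by push_cast; ring
    rw [angle_sub, angle_add, cos_sub, cos_add]
    ring
  simp only [product_to_sum, sum_sub_distrib, ← sum_div, sum_add_distrib,
    sum_range_cos_two_pi_mul_div hN, if_neg hsub, if_neg hadd]
  split_ifs <;> simp

lemma sum_Icc_cos_mul_neg_one_add_cos_nonpos {N : ℕ} {p k : ℤ} (hN : N ≠ 0)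
    (hsub : ¬ (N : ℤ) ∣ k - p) (hadd : ¬ (N : ℤ) ∣ k + p) :
    ∑ l ∈ Icc 1 (N - 1), cos (2 * π * p * l / N) * (-1 + cos (2 * π * k * l / N)) ≤ 0 := by
  have range_eq : range N = insert 0 (Icc 1 (N - 1)) := by
    ext l
    simp only [mem_range, mem_insert, mem_Icc]
    omega
  have row_sum := sum_range_cos_mul_neg_one_add_cos hN hsub hadd
  rw [range_eq, sum_insert (by simp)] at row_sum
  simp only [Nat.cast_zero, mul_zero, zero_div, cos_zero, neg_add_cancel, zero_add] at row_sum
  rw [row_sum]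
  split_ifs <;> simp

lemma cos_two_pi_mul_nonpos_of_fract_mem_Icc {t : ℝ} (ht : Int.fract t ∈ Set.Icc (1 / 4) (3 / 4)) :
    cos (2 * π * t) ≤ 0 := by
  have angle_eq : 2 * π * t = 2 * π * Int.fract t + ⌊t⌋ * (2 * π) := by
    rw [← Int.self_sub_floor]
    ring
  rw [angle_eq, cos_add_int_mul_two_pi]
  apply cos_nonpos_of_pi_div_two_le_of_le <;> nlinarith [pi_pos, ht.1, ht.2]

theorem row_nonpos_of_S_filled_general {N : ℕ} {p k : ℤ} {x : ℕ → ℝ} (hN : N ≠ 0)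
    (hx_le : ∀ l ∈ Icc 1 (N - 1), x l ≤ 1)
    (hxS : ∀ l ∈ Icc 1 (N - 1),
      (Int.fract ((p : ℝ) * l / N) ≤ 1 / 4 ∨ 3 / 4 ≤ Int.fract ((p : ℝ) * l / N)) → x l = 1)
    (hsub : ¬ (N : ℤ) ∣ k - p) (hadd : ¬ (N : ℤ) ∣ k + p) :
    ∑ l ∈ Icc 1 (N - 1),
      x l * cos (2 * π * p * l / N) * (-1 + cos (2 * π * k * l / N)) ≤ 0 := by
  refine (sum_le_sum fun l hl ↦ ?_).trans (sum_Icc_cos_mul_neg_one_add_cos_nonpos hN hsub hadd)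
  have row_factor_nonpos : -1 + cos (2 * π * k * l / N) ≤ 0 := by
    linarith [cos_le_one (2 * π * k * l / N)]
  by_cases hl_S : Int.fract ((p : ℝ) * l / N) ≤ 1 / 4 ∨ 3 / 4 ≤ Int.fract ((p : ℝ) * l / N)
  · rw [hxS l hl hl_S, one_mul]
  · push Not at hl_S
    have cos_nonpos : cos (2 * π * p * l / N) ≤ 0 := by
      convert cos_two_pi_mul_nonpos_of_fract_mem_Icc ⟨hl_S.1.le, hl_S.2.le⟩ using 2
      ring
    rw [mul_assoc]
    exact mul_le_of_le_one_left
      (mul_nonneg_of_nonpos_of_nonpos cos_nonpos row_factor_nonpos) (hx_le l hl)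

/-- Let `S^{(N,p)} = {l ∈ {1,…,N-1} : {pl/N} ∈ [0,1/4] ∪ [3/4,1)}`. If `x ∈ {0,1}^{N-1}`
is symmetric (`x l = x (N-l)`) and `x l = 1` for every `l ∈ S^{(N,p)}`, then for every
`k ∈ {1,…,N-1}` with `N ∤ k - p` and `N ∤ k + p`, one has `(L^{(N,p)} x)_k ≤ 0`. -/
theorem row_nonpos_of_S_filled (N p : ℕ) (hN : 2 ≤ N) (hp1 : 1 ≤ p) (hp2 : p ≤ N / 2)
    (x : ℕ → ℝ)
    (hx01 : ∀ l ∈ Finset.Icc 1 (N - 1), x l = 0 ∨ x l = 1)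
    (hxsym : ∀ l ∈ Finset.Icc 1 (N - 1), x l = x (N - l))
    (hxS : ∀ l ∈ Finset.Icc 1 (N - 1),
      (Int.fract ((p : ℝ) * l / N) ≤ 1 / 4 ∨ 3 / 4 ≤ Int.fract ((p : ℝ) * l / N)) → x l = 1)
    (k : ℕ) (hk : k ∈ Finset.Icc 1 (N - 1))
    (h1 : ¬ (N : ℤ) ∣ ((k : ℤ) - (p : ℤ))) (h2 : ¬ (N : ℤ) ∣ ((k : ℤ) + (p : ℤ))) :
    ∑ l ∈ Finset.Icc 1 (N - 1),
      x l * Real.cos (2 * π * p * l / N) * (-1 + Real.cos (2 * π * k * l / N)) ≤ 0 := by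
  have hx_le (l) (hl : l ∈ Icc 1 (N - 1)) : x l ≤ 1 := by rcases hx01 l hl with h | h <;> simp [h]
  simpa using row_nonpos_of_S_filled_general (p := p) (by omega) hx_le (by simpa using hxS) h1 h2
end

section
/- Let N ≥ 1 be an integer, let x : ℤ → ℝ be N-periodic with x_l = x_{N−l} for all l, and define a_{ij} = x_{j−i} for i,j ∈ {1,…,N}. Then for every integer p, the p-twisted state θ*, defined by θ*_j = 2πpj/N, is an equilibrium: for every i ∈ {1,…,N}, ∑_{j=1}^{N} a_{ij}·sin(θ*_j − θ*_i) = 0. -/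
open Real Finset

/-!
Around the oscillator `i`, the force exerted by the oscillator `j` depends only on `l = j - i`: it
is the product of the even sequence `x l` and the odd sequence `f (2πpl/N)`, where `f = sin` or any
other odd `2π`-periodic coupling. This product is odd and `N`-periodic. Its sum over a period
does not depend on where the period starts, so it is invariant under `l ↦ -l`, which
also changes its sign.
-/

section PeriodSums

variable {M : Type*} {g : ℤ → M} {N : ℕ}

theorem sum_Ico_add_eq_of_periodic [AddCommMonoid M] (hg : Function.Periodic g N) (a b : ℤ) :
    ∑ l ∈ Ico a (a + N), g l = ∑ l ∈ Ico b (b + N), g l := by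
  suffices h : ∀ c : ℤ, ∑ l ∈ Ico c (c + N), g l = ∑ r ∈ Ico 0 (N : ℤ), g r from
    (h a).trans (h b).symm
  intro c
  have himage : (Ico c (c + N)).image (· % (N : ℤ)) = Ico 0 (N : ℤ) :=
    Int.image_Ico_emod c N N.cast_nonneg
  have hinj : Set.InjOn (· % (N : ℤ)) (Ico c (c + N) : Finset ℤ) :=
    injOn_of_card_image_eq (by simp [himage])
  rw [← himage, sum_image hinj]
  refine sum_congr rfl fun l _ ↦ ?_
  rw [Int.emod_def, mul_comm, ← smul_eq_mul, hg.sub_zsmul_eq]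

variable [AddCommGroup M] [IsAddTorsionFree M]

theorem sum_Ico_add_eq_zero_of_odd_of_periodic (hodd : g.Odd)
    (hg : Function.Periodic g N) (a : ℤ) : ∑ l ∈ Ico a (a + N), g l = 0 := by
  refine self_eq_neg.mp ?_
  calc ∑ l ∈ Ico a (a + N), g l
      = ∑ l ∈ Ico (1 - a - N) (1 - a - N + N), g l := sum_Ico_add_eq_of_periodic hg _ _
    _ = ∑ l ∈ Ico a (a + N), g (-l) :=
        sum_nbij' (- ·) (- ·) (by grind) (by grind) (by simp) (by simp) (by simp)
    _ = -∑ l ∈ Ico a (a + N), g l := by simp only [hodd.eq, sum_neg_distrib]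

theorem sum_Icc_natCast_sub_eq_zero_of_odd_of_periodic (hodd : g.Odd)
    (hg : Function.Periodic g N) (i : ℤ) : ∑ j ∈ Icc 1 N, g (j - i) = 0 := by
  rw [← sum_Ico_add_eq_zero_of_odd_of_periodic hodd hg (1 - i)]
  exact sum_nbij' (fun j ↦ (j : ℤ) - i) (fun l ↦ (l + i).toNat)
    (by grind) (by grind) (by grind) (by grind) (by simp)

end PeriodSums

theorem even_of_periodic_of_eq_sub {α β : Type*} [SubtractionCommMonoid α] {x : α → β} {c : α}
    (hper : Function.Periodic x c) (hsym : ∀ l, x l = x (c - l)) : x.Even :=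
  fun l ↦ hper.sub_eq'.symm.trans (hsym l).symm

/-- The phases `θ*_j = 2πpj/N` of the `p`-twisted state of `N` oscillators. They are real numbers,
not reduced modulo `2π`, and `j` ranges over all integers, so that differences of oscillator
indices may be inserted as well. -/
noncomputable def twistedState (N : ℕ) (p j : ℤ) : ℝ :=
  2 * π * p * j / N

namespace twistedState

variable {N : ℕ} (p : ℤ)

theorem sub_eq (j i : ℤ) :
    twistedState N p j - twistedState N p i = twistedState N p (j - i) := by
  simp only [twistedState, Int.cast_sub]
  ring

theorem odd : (twistedState N p).Odd := fun j ↦ by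
  simp only [twistedState, Int.cast_neg]
  ring

theorem add_natCast (hN : N ≠ 0) (j : ℤ) :
    twistedState N p (j + N) = twistedState N p j + p * (2 * π) := by
  simp only [twistedState, Int.cast_add, Int.cast_natCast]
  field_simp

theorem periodic_comp {β : Type*} {f : ℝ → β} (hf : Function.Periodic f (2 * π)) :
    Function.Periodic (f ∘ twistedState N p) N := fun j ↦ by
  obtain rfl | hN := eq_or_ne N 0
  · simp
  · simp only [Function.comp_apply, add_natCast p hN, hf.int_mul p _]

end twistedState

theorem twisted_state_equilibrium_general {N : ℕ} {x : ℤ → ℝ} {f : ℝ → ℝ}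
    (hper : Function.Periodic x N) (hsym : ∀ l : ℤ, x l = x (N - l))
    (hodd : f.Odd) (hf : Function.Periodic f (2 * π)) (p i : ℤ) :
    ∑ j ∈ Icc 1 N, x (j - i) * f (twistedState N p j - twistedState N p i) = 0 := by
  have hforce_odd : (x * f ∘ twistedState N p).Odd :=
    (even_of_periodic_of_eq_sub hper hsym).mul_odd (hodd.comp_odd (twistedState.odd p))
  have hforce_per : Function.Periodic (x * f ∘ twistedState N p) N :=
    hper.mul (twistedState.periodic_comp p hf)
  simp only [twistedState.sub_eq]
  exact sum_Icc_natCast_sub_eq_zero_of_odd_of_periodic hforce_odd hforce_per i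

/-- On a circulant network (`a_{ij} = x_{j-i}` with `x` `N`-periodic and symmetric),
every `p`-twisted state `θ*_j = 2πpj/N` is an equilibrium of the coupled identical
phase-oscillator system: `∑_{j=1}^N a_{ij} sin(θ*_j - θ*_i) = 0` for all `i`. -/
theorem twisted_state_equilibrium (N : ℕ) (hN : 1 ≤ N) (x : ℤ → ℝ)
    (hper : ∀ l : ℤ, x (l + N) = x l)
    (hsym : ∀ l : ℤ, x l = x ((N : ℤ) - l)) (p : ℤ) :
    ∀ i ∈ Finset.Icc 1 N, ∑ j ∈ Finset.Icc 1 N,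
      x ((j : ℤ) - (i : ℤ)) *
        Real.sin (2 * π * p * j / N - 2 * π * p * i / N) = 0 := by
  intro i _
  simpa only [twistedState, Int.cast_natCast] using
    twisted_state_equilibrium_general hper hsym sin_neg sin_periodic p i
end

section
/- Let N ≥ 2 be an integer, let x : ℤ → ℝ be N-periodic with x_0 = 0 and x_l = x_{N−l} for all l, and let p be an integer. Define the N×N Jacobian matrix J of the p-twisted state by J_{ij} = x_{j−i}·cos(2πp(j−i)/N) for i ≠ j and J_{ii} = −∑_{k=1}^{N} x_{k−i}·cos(2πp(k−i)/N). Then for every k ∈ {1,…,N−1}, the vector v ∈ ℝ^N with v_j = cos(2πkj/N) satisfies J·v = λ_k·v, where λ_k = ∑_{l=1}^{N−1} x_l·cos(2πpl/N)·(−1 + cos(2πkl/N)). -/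
open Real Finset

/-!
Modulo `N`, the Jacobian is a circulant matrix minus a multiple of the identity, with even weights
`w l = x l * cos (2πpl/N)`. The vector `C l = cos (2πkl/N)` is the real part of a character, so
`C (i + l) + C (i - l) = 2 * C i * C l`. Since `w` is even, the sums `∑ w l * C (i + l)` and
`∑ w l * C (i - l)` agree, so each equals `(∑ w l * C l) * C i`.
-/

section Laplacian

open Matrix

lemma re_addChar_add_add_re_addChar_sub {G : Type*} [AddCommGroup G] [Finite G]
    (ψ : AddChar G ℂ) (a b : G) :
    (ψ (a + b)).re + (ψ (a - b)).re = 2 * (ψ a).re * (ψ b).re := by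
  rw [sub_eq_add_neg, AddChar.map_add_eq_mul, AddChar.map_add_eq_mul, AddChar.map_neg_eq_conj]
  simp only [Complex.mul_re, Complex.conj_re, Complex.conj_im]
  ring

variable {G : Type*} [AddCommGroup G] [Fintype G]

/-- The circulant Laplacian of the weights `w`, with the sign convention of a Jacobian: the rows
sum to zero, and the value `w 0` cancels between the two terms. -/
def circulantLaplacian {R : Type*} [Ring R] [DecidableEq G] (w : G → R) : Matrix G G R :=
  circulant w - scalar G (∑ g, w g)

theorem circulant_mulVec_re_addChar {w : G → ℝ} (hw : w.Even) (ψ : AddChar G ℂ) :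
    circulant w *ᵥ (fun g ↦ (ψ g).re) = (∑ g, w g * (ψ g).re) • fun g ↦ (ψ g).re := by
  ext i
  have mulVec_apply_eq : (circulant w *ᵥ fun g ↦ (ψ g).re) i = ∑ g, w g * (ψ (i - g)).re :=
    Fintype.sum_equiv (Equiv.subLeft i) _ _ fun j ↦ by simp [circulant_apply]
  have sum_reflect : ∑ g, w g * (ψ (i - g)).re = ∑ g, w g * (ψ (i + g)).re :=
    Fintype.sum_equiv (Equiv.neg G) _ _ fun g ↦ by simp [hw g, sub_eq_add_neg]
  have sum_add_sum : ∑ g, w g * (ψ (i + g)).re + ∑ g, w g * (ψ (i - g)).re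
      = 2 * ((∑ g, w g * (ψ g).re) * (ψ i).re) := by
    simp only [← sum_add_distrib, ← mul_add, re_addChar_add_add_re_addChar_sub, sum_mul, mul_sum]
    exact sum_congr rfl fun g _ ↦ by ring
  rw [mulVec_apply_eq, Pi.smul_apply, smul_eq_mul]
  linarith

theorem circulantLaplacian_mulVec_re_addChar [DecidableEq G] {w : G → ℝ} (hw : w.Even)
    (ψ : AddChar G ℂ) :
    circulantLaplacian w *ᵥ (fun g ↦ (ψ g).re)
      = (∑ g, w g * (-1 + (ψ g).re)) • fun g ↦ (ψ g).re := by
  have eigenvalue_eq : ∑ g, w g * (-1 + (ψ g).re) = ∑ g, w g * (ψ g).re - ∑ g, w g := by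
    rw [← sum_sub_distrib]
    exact sum_congr rfl fun g _ ↦ by ring
  rw [circulantLaplacian, sub_mulVec, circulant_mulVec_re_addChar hw, eigenvalue_eq, sub_smul,
    scalar_apply, ← smul_one_eq_diagonal, smul_mulVec, one_mulVec]

end Laplacian

section ResidueSums

variable {N : ℕ}

lemma natCast_zmod_injOn_Ico (a : ℕ) :
    Set.InjOn (Nat.cast : ℕ → ZMod N) (Ico a (a + N)) := fun i hi j hj hij ↦
  Nat.mod_injOn_Ico a N hi hj ((ZMod.natCast_eq_natCast_iff' i j N).1 hij)

variable [NeZero N]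

lemma image_natCast_zmod_Ico (a : ℕ) : (Ico a (a + N)).image (Nat.cast : ℕ → ZMod N) = univ := by
  apply eq_univ_of_card
  rw [card_image_of_injOn (natCast_zmod_injOn_Ico a), Nat.card_Ico, ZMod.card,
    Nat.add_sub_cancel_left]

lemma sum_Ico_natCast_zmod {M : Type*} [AddCommMonoid M] (f : ZMod N → M) (a : ℕ) :
    ∑ j ∈ Ico a (a + N), f j = ∑ r, f r := by
  rw [← image_natCast_zmod_Ico a, sum_image (natCast_zmod_injOn_Ico a)]

lemma sum_Icc_one_pred_natCast_zmod {M : Type*} [AddCommMonoid M] {f : ZMod N → M}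
    (h0 : f 0 = 0) : ∑ l ∈ Icc 1 (N - 1), f l = ∑ r, f r := by
  have Icc_eq : Icc 1 (N - 1) = Ico 1 N :=
    Icc_sub_one_right_eq_Ico_of_not_isMin (by simp [NeZero.ne N]) 1
  rw [Icc_eq, ← sum_Ico_natCast_zmod f 0, zero_add N, sum_eq_sum_Ico_succ_bot (NeZero.pos N),
    Nat.cast_zero, h0, zero_add, zero_add]

end ResidueSums

section TwistedState

/-- The character `l ↦ exp (2πiql/N)` of `ZMod N`. -/
noncomputable def cyclicChar (N : ℕ) [NeZero N] (q : ℤ) : AddChar (ZMod N) ℂ :=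
  ZMod.stdAddChar.mulShift q

/-- The coupling strengths `x l * cos (2πpl/N)` of the linearization at the `p`-twisted state, as a
function on residues; `x` is evaluated at the representative of `r` in `{0, …, N - 1}`. -/
noncomputable def twistedWeight (N : ℕ) [NeZero N] (x : ℤ → ℝ) (p : ℤ) (r : ZMod N) : ℝ :=
  x r.cast * (cyclicChar N p r).re

variable {N : ℕ} [NeZero N] {x : ℤ → ℝ} {p : ℤ}

lemma re_cyclicChar_intCast (q l : ℤ) :
    (cyclicChar N q l).re = cos (2 * π * q * l / N) := by
  rw [cyclicChar, AddChar.mulShift_apply, ← Int.cast_mul, ZMod.stdAddChar_coe,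
    ← Complex.exp_ofReal_mul_I_re]
  congr 2
  push_cast
  ring

lemma re_cyclicChar_natCast (q : ℤ) (l : ℕ) :
    (cyclicChar N q l).re = cos (2 * π * q * l / N) := by
  simpa using re_cyclicChar_intCast (N := N) q l

lemma twistedWeight_intCast (hx : Function.Periodic x N) (l : ℤ) :
    twistedWeight N x p l = x l * cos (2 * π * p * l / N) := by
  have cast_cast : x ((l : ZMod N).cast) = x l := by
    rw [ZMod.coe_intCast, Int.emod_def, mul_comm]
    exact hx.sub_int_mul_eq _
  rw [twistedWeight, re_cyclicChar_intCast, cast_cast]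

lemma twistedWeight_natCast_sub (hx : Function.Periodic x N) (i j : ℕ) :
    twistedWeight N x p (j - i) = x (j - i) * cos (2 * π * p * ((j : ℝ) - i) / N) := by
  simpa using twistedWeight_intCast (p := p) hx (j - i)

lemma twistedWeight_even (hx : Function.Periodic x N) (hx_even : x.Even) :
    (twistedWeight N x p).Even := by
  intro r
  obtain ⟨l, rfl⟩ := ZMod.intCast_surjective r
  rw [← Int.cast_neg, twistedWeight_intCast hx, twistedWeight_intCast hx, hx_even, Int.cast_neg,
    mul_neg, neg_div, cos_neg]

lemma twistedWeight_zero (h0 : x 0 = 0) : twistedWeight N x p 0 = 0 := by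
  simp [twistedWeight, h0]

end TwistedState

lemma eq_circulantLaplacian_of_offDiag_of_diag {R : Type*} [Ring R] {N : ℕ} [NeZero N]
    {w : ZMod N → R} (hw : w.Even) (h0 : w 0 = 0) {J : ℕ → ℕ → R}
    (hoff : ∀ i j : ℕ, i ≠ j → J i j = w (j - i)) {a : ℕ}
    (hdiag : ∀ i : ℕ, J i i = -∑ k ∈ Ico a (a + N), w (k - i))
    {i j : ℕ} (hi : i ∈ Ico a (a + N)) (hj : j ∈ Ico a (a + N)) :
    J i j = circulantLaplacian w i j := by
  rw [circulantLaplacian, Matrix.sub_apply, Matrix.circulant_apply, Matrix.scalar_apply]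
  rcases eq_or_ne i j with rfl | hij
  · have row_sum : ∑ k ∈ Ico a (a + N), w (k - i) = ∑ r, w r := by
      rw [sum_Ico_natCast_zmod fun r : ZMod N ↦ w (r - i)]
      exact Equiv.sum_comp (Equiv.subRight (i : ZMod N)) w
    rw [hdiag, row_sum, sub_self, h0, Matrix.diagonal_apply_eq, zero_sub]
  · have cast_ne : (i : ZMod N) ≠ j := (natCast_zmod_injOn_Ico a).ne hi hj hij
    rw [hoff i j hij, Matrix.diagonal_apply_ne _ cast_ne, sub_zero, ← hw, neg_sub]

/-- The Jacobian of the `p`-twisted state on a circulant network has eigenvectors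
`v_j = cos(2πkj/N)` with eigenvalues
`λ_k = ∑_{l=1}^{N-1} x_l cos(2πpl/N)(-1 + cos(2πkl/N))` for `k ∈ {1,…,N-1}`. -/
theorem jacobian_eigen (N : ℕ) (hN : 2 ≤ N) (x : ℤ → ℝ)
    (hper : ∀ l : ℤ, x (l + N) = x l) (h0 : x 0 = 0)
    (hsym : ∀ l : ℤ, x l = x ((N : ℤ) - l)) (p : ℤ)
    (J : ℕ → ℕ → ℝ)
    (hJoff : ∀ i j : ℕ, i ≠ j →
      J i j = x ((j : ℤ) - (i : ℤ)) * Real.cos (2 * π * p * ((j : ℝ) - (i : ℝ)) / N))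
    (hJdiag : ∀ i : ℕ,
      J i i = -∑ k ∈ Finset.Icc 1 N,
        x ((k : ℤ) - (i : ℤ)) * Real.cos (2 * π * p * ((k : ℝ) - (i : ℝ)) / N))
    (k : ℕ) (hk : k ∈ Finset.Icc 1 (N - 1)) :
    ∀ i ∈ Finset.Icc 1 N,
      ∑ j ∈ Finset.Icc 1 N, J i j * Real.cos (2 * π * k * j / N)
        = (∑ l ∈ Finset.Icc 1 (N - 1),
            x l * Real.cos (2 * π * p * l / N) * (-1 + Real.cos (2 * π * k * l / N)))
          * Real.cos (2 * π * k * i / N) := by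
  have : NeZero N := ⟨by omega⟩
  have Icc_eq : Icc 1 N = Ico 1 (1 + N) := by rw [add_comm]; rfl
  have x_even : x.Even := fun l ↦ by rw [hsym, sub_neg_eq_add, add_comm, hper]
  set w := twistedWeight N x p
  set C : ZMod N → ℝ := fun r ↦ (cyclicChar N k r).re
  have w_even : w.Even := twistedWeight_even hper x_even
  have w_zero : w 0 = 0 := twistedWeight_zero h0
  have w_sub (i j : ℕ) : x (j - i) * cos (2 * π * p * ((j : ℝ) - i) / N) = w (j - i) :=
    (twistedWeight_natCast_sub hper i j).symm
  have w_nat (l : ℕ) : x l * cos (2 * π * p * l / N) = w l := by simpa using w_sub 0 l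
  have C_nat (j : ℕ) : cos (2 * π * k * j / N) = C j := (re_cyclicChar_natCast k j).symm
  simp only [Icc_eq, C_nat, w_sub, w_nat] at hJoff hJdiag ⊢
  intro i hi
  calc ∑ j ∈ Ico 1 (1 + N), J i j * C j
      = ∑ j ∈ Ico 1 (1 + N), circulantLaplacian w i j * C j := sum_congr rfl fun j hj ↦ by
        rw [eq_circulantLaplacian_of_offDiag_of_diag w_even w_zero hJoff hJdiag hi hj]
    _ = (circulantLaplacian w).mulVec C i :=
        sum_Ico_natCast_zmod (fun r ↦ circulantLaplacian w i r * C r) 1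
    _ = (∑ r, w r * (-1 + C r)) * C i :=
        congrFun (circulantLaplacian_mulVec_re_addChar w_even _) i
    _ = (∑ l ∈ Icc 1 (N - 1), w l * (-1 + C l)) * C i := by
        rw [sum_Icc_one_pred_natCast_zmod (f := fun r ↦ w r * (-1 + C r)) (by simp [w_zero])]
end

section
/- Let N ≥ 2 and 1 ≤ p ≤ ⌊N/2⌋ be integers and set m = gcd(N,p). Then the set of achievable values {∑_{l=1}^{N−1} x_l : x feasible for (N,p)} equals the set {∑_{l=1}^{N−1} x_l : x feasible for (N,m)}. In particular, the maximum connectivities for (N,p) and (N,m) coincide whenever either feasible set is nonempty. -/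
open Real Finset

/-!
Every cosine in the feasibility conditions depends only on the residue of its frequency modulo `N`,
so indices can be read in `ZMod N`, with `l ↦ N - l` becoming negation. There, the substitution
`l ↦ u * l` by a unit `u` permutes the nonzero residues and carries feasible vectors for `q` to
feasible vectors for `q * u` (the condition at `k` becomes the one at `k * u⁻¹`) without changing
their sum. Finally, `p` and `gcd(N, p)` differ by a unit of `ZMod N`.
-/

lemma associated_natCast_gcd (N p : ℕ) [NeZero N] :
    Associated (p : ZMod N) (N.gcd p : ZMod N) := by
  obtain ⟨d, d_dvd, _, ⟨u, rfl⟩, hp⟩ := ZMod.eq_unit_mul_divisor (p : ZMod N)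
  have p_modEq : p ≡ (u : ZMod N).val * d [MOD N] := by
    rw [← ZMod.natCast_eq_natCast_iff]
    simpa using hp
  have gcd_eq : N.gcd p = d :=
    calc
      N.gcd p = N.gcd ((u : ZMod N).val * d) := by
        rw [Nat.gcd_comm, p_modEq.gcd_eq, Nat.gcd_comm]
      _ = N.gcd d := (ZMod.val_coe_unit_coprime u).gcd_mul_left_cancel_right d
      _ = d := Nat.gcd_eq_right d_dvd
  rw [gcd_eq, hp]
  exact associated_unit_mul_left _ _ u.isUnit

lemma sum_compl_zero_unit_mul {R M : Type*} [MonoidWithZero R] [Fintype R] [DecidableEq R]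
    [AddCommMonoid M] (u : Rˣ) (f : R → M) :
    ∑ a ∈ ({0}ᶜ : Finset R), f (u * a) = ∑ a ∈ ({0}ᶜ : Finset R), f a :=
  Finset.sum_equiv u.mulLeft (by simp) (by simp)

section ResidueIndices

variable {N : ℕ} [NeZero N]

lemma image_val_compl_zero : ({0}ᶜ : Finset (ZMod N)).image ZMod.val = Icc 1 (N - 1) := by
  ext l
  simp only [mem_image, mem_compl, mem_singleton, mem_Icc]
  constructor
  · rintro ⟨a, ha, rfl⟩
    have := ZMod.val_pos.2 ha
    have := a.val_lt
    omega
  · rintro ⟨one_le, le_pred⟩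
    have hval : (l : ZMod N).val = l := ZMod.val_cast_of_lt (by omega)
    exact ⟨l, ZMod.val_pos.1 (by omega), hval⟩

lemma forall_mem_Icc_iff_forall_val {P : ℕ → Prop} :
    (∀ l ∈ Icc 1 (N - 1), P l) ↔ ∀ a : ZMod N, a ≠ 0 → P a.val := by
  simp only [← image_val_compl_zero, forall_mem_image, mem_compl, mem_singleton, ne_eq]

lemma sum_Icc_eq_sum_val {M : Type*} [AddCommMonoid M] (f : ℕ → M) :
    ∑ l ∈ Icc 1 (N - 1), f l = ∑ a ∈ ({0}ᶜ : Finset (ZMod N)), f a.val := by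
  rw [← image_val_compl_zero, sum_image (ZMod.val_injective N).injOn]

/-- The cosine `cos (2πa/N)` of a residue `a` modulo `N`, encoded as the real part of the standard
additive character so that it is visibly independent of the representative. -/
noncomputable def residueCos (a : ZMod N) : ℝ :=
  (ZMod.stdAddChar a).re

lemma residueCos_natCast (j : ℕ) : residueCos (j : ZMod N) = Real.cos (2 * π * j / N) := by
  rw [residueCos, ZMod.stdAddChar_apply, ZMod.toCircle_natCast, ← Complex.exp_ofReal_mul_I_re]
  push_cast
  ring_nf

/-- Feasibility of a vector indexed by residues modulo `N`, for a residue `q` in place of `p`.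
The entry at `0` has no counterpart in `feasible` and is left unconstrained. -/
structure ResidueFeasible (q : ZMod N) (y : ZMod N → ℝ) : Prop where
  eq_zero_or_eq_one : ∀ a ≠ 0, y a = 0 ∨ y a = 1
  eq_apply_neg : ∀ a ≠ 0, y a = y (-a)
  sum_neg : ∀ k ≠ 0,
    ∑ a ∈ ({0}ᶜ : Finset (ZMod N)), y a * residueCos (q * a) * (-1 + residueCos (k * a)) < 0

/-- The sums of entries, that at `0` excluded, of the residue-indexed feasible vectors for `q`. -/
def residueAchievable (q : ZMod N) : Set ℝ :=
  {S | ∃ y : ZMod N → ℝ, ResidueFeasible q y ∧ S = ∑ a ∈ ({0}ᶜ : Finset (ZMod N)), y a}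

lemma feasible_iff_residueFeasible {p : ℕ} {x : ℕ → ℝ} :
    feasible N p x ↔ ResidueFeasible (p : ZMod N) (fun a => x a.val) := by
  have cos_mul_val (j : ℕ) (a : ZMod N) :
      Real.cos (2 * π * j * a.val / N) = residueCos ((j : ZMod N) * a) := by
    rw [← ZMod.natCast_zmod_val a, ← Nat.cast_mul, residueCos_natCast, ZMod.natCast_zmod_val]
    push_cast
    ring_nf
  have even_iff : (∀ l ∈ Icc 1 (N - 1), x l = x (N - l)) ↔
      ∀ a : ZMod N, a ≠ 0 → x a.val = x (-a).val := by
    rw [forall_mem_Icc_iff_forall_val]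
    refine forall₂_congr fun a ha => ?_
    rw [ZMod.neg_val, if_neg ha]
  rw [feasible, even_iff, forall_mem_Icc_iff_forall_val, forall_mem_Icc_iff_forall_val]
  simp only [sum_Icc_eq_sum_val, cos_mul_val, ZMod.natCast_zmod_val]
  exact ⟨fun ⟨binary, even, neg⟩ => ⟨binary, even, neg⟩,
    fun ⟨binary, even, neg⟩ => ⟨binary, even, neg⟩⟩

lemma achievable_eq_residueAchievable (p : ℕ) :
    {S : ℝ | ∃ x : ℕ → ℝ, feasible N p x ∧ S = ∑ l ∈ Icc 1 (N - 1), x l} =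
      residueAchievable (p : ZMod N) := by
  ext S
  simp only [residueAchievable, Set.mem_ofPred_eq, feasible_iff_residueFeasible, sum_Icc_eq_sum_val]
  constructor
  · rintro ⟨x, hx, hS⟩
    exact ⟨fun a => x a.val, hx, hS⟩
  · rintro ⟨y, hy, hS⟩
    exact ⟨fun l => y l, by simpa using hy, by simpa using hS⟩

lemma ResidueFeasible.comp_unit_mul {q : ZMod N} {y : ZMod N → ℝ} (hy : ResidueFeasible q y)
    (u : (ZMod N)ˣ) : ResidueFeasible (q * (u : ZMod N)) (fun a => y ((u : ZMod N) * a)) where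
  eq_zero_or_eq_one a ha := hy.eq_zero_or_eq_one _ (by simpa using ha)
  eq_apply_neg a ha := by simpa using hy.eq_apply_neg ((u : ZMod N) * a) (by simpa using ha)
  sum_neg k hk := by
    have := hy.sum_neg (k * (↑u⁻¹ : ZMod N)) (by simpa using hk)
    rw [← sum_compl_zero_unit_mul u] at this
    simpa only [← mul_assoc, Units.inv_mul_cancel_right] using this

lemma residueAchievable_subset_of_associated {q r : ZMod N} (h : Associated q r) :
    residueAchievable q ⊆ residueAchievable r := by
  obtain ⟨u, rfl⟩ := h
  rintro S ⟨y, hy, rfl⟩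
  exact ⟨fun a => y ((u : ZMod N) * a), hy.comp_unit_mul u, (sum_compl_zero_unit_mul u y).symm⟩

lemma residueAchievable_eq_of_associated {q r : ZMod N} (h : Associated q r) :
    residueAchievable q = residueAchievable r :=
  (residueAchievable_subset_of_associated h).antisymm
    (residueAchievable_subset_of_associated h.symm)

end ResidueIndices

theorem achievable_eq_gcd_general {N p q : ℕ} [NeZero N] (h : N.gcd p = N.gcd q) :
    {S : ℝ | ∃ x : ℕ → ℝ, feasible N p x ∧ S = ∑ l ∈ Icc 1 (N - 1), x l} =
      {S : ℝ | ∃ x : ℕ → ℝ, feasible N q x ∧ S = ∑ l ∈ Icc 1 (N - 1), x l} := by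
  have p_assoc_q : Associated (p : ZMod N) (q : ZMod N) :=
    (associated_natCast_gcd N p).trans (h ▸ (associated_natCast_gcd N q).symm)
  rw [achievable_eq_residueAchievable, achievable_eq_residueAchievable,
    residueAchievable_eq_of_associated p_assoc_q]

/-- With `m = gcd(N, p)`, the achievable values `∑_{l=1}^{N-1} x_l` over feasible vectors
for `(N, p)` are the same as those over feasible vectors for `(N, m)`. -/
theorem achievable_eq_gcd (N p : ℕ) (hN : 2 ≤ N) (hp1 : 1 ≤ p) (hp2 : p ≤ N / 2)
    (m : ℕ) (hm : m = Nat.gcd N p) :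
    {S : ℝ | ∃ x : ℕ → ℝ, feasible N p x ∧ S = ∑ l ∈ Finset.Icc 1 (N - 1), x l}
      = {S : ℝ | ∃ x : ℕ → ℝ, feasible N m x ∧ S = ∑ l ∈ Finset.Icc 1 (N - 1), x l} := by
  have : NeZero N := ⟨by omega⟩
  exact achievable_eq_gcd_general (by simp [hm])
end

section
/- Let N ≥ 5 be an integer. Then the maximum of the set {(∑_{l=1}^{N−1} x_l)/(N−1) : x feasible for (N,1)} equals 2(k_c(N) − 1)/(N−1), where k_c(N) is the least k ∈ {1,…,N−1} with s_k = ∑_{l=1}^{k} cos(2πl/N)·(−1 + cos(2πl/N)) ≥ 0; in particular the feasible set is nonempty and the maximum is attained. -/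
open Real Finset

/-!
Write `h = π / N` and `a_l = cos (2lh) (cos (2lh) - 1)`. Row `k` of the matrix, summed over
`1 ≤ l ≤ m`, is a combination of the Dirichlet sums `D_m t = ∑_{l ≤ m} cos (2lt)` at
`t = (k - 1) h, h, (k + 1) h`.

* Lower bound: the symmetric block `{l : l ≤ m or N - l ≤ m}` with `m = k_c - 1` is feasible. Row
  `1` holds by definition of `k_c`; it forces `(2m + 1) h < 3π / 4`, so that `D_m` at `h` exceeds
  its values on `[2h, π - 2h]`, and this gives all the other rows.
* Upper bound: `a` is increasing up to `N / 2` from `k_c` on, and at most `a_{k_c}` before, so by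
  the bathtub principle row `1` already excludes more than `m` ones on `1 ≤ l < N / 2`. For even `N`
  there is also the entry at `N / 2`, where `a = 2`: `m` ones together with that entry are excluded
  because `s_m ≥ -1`, by a trapezoidal estimate for `s_m + s_{m+1}`.
-/

section Sums

theorem sum_add_mul_le_sum_mul_of_bathtub {ι R : Type*} [DecidableEq ι]
    [CommRing R] [LinearOrder R] [IsStrictOrderedRing R] {S T : Finset ι} (hST : S ⊆ T)
    {a x : ι → R} {c : R} (hx₀ : ∀ i ∈ T, 0 ≤ x i) (hx₁ : ∀ i ∈ S, x i ≤ 1)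
    (hS : ∀ i ∈ S, a i ≤ c) (hT : ∀ i ∈ T \ S, c ≤ a i) :
    ∑ i ∈ S, a i + c * (∑ i ∈ T, x i - #S) ≤ ∑ i ∈ T, x i * a i := by
  have inside : ∑ i ∈ S, (a i - c) ≤ ∑ i ∈ S, x i * (a i - c) :=
    sum_le_sum fun i hi => by nlinarith [hx₁ i hi, hS i hi]
  have outside : 0 ≤ ∑ i ∈ T \ S, x i * (a i - c) :=
    sum_nonneg fun i hi => mul_nonneg (hx₀ i (sdiff_subset hi)) (sub_nonneg.2 (hT i hi))
  have excess : ∑ i ∈ S, (a i - c) ≤ ∑ i ∈ T, x i * (a i - c) := by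
    rw [← sum_sdiff hST]
    linarith
  simp only [mul_sub, sum_sub_distrib, ← sum_mul, sum_const, nsmul_eq_mul] at excess
  linarith

theorem exists_nat_sum_eq_of_zero_or_one {ι R : Type*} [NonAssocSemiring R] {S : Finset ι}
    {x : ι → R} (hx : ∀ i ∈ S, x i = 0 ∨ x i = 1) : ∃ n ≤ #S, ∑ i ∈ S, x i = n := by
  classical
  refine ⟨#{i ∈ S | x i = 1}, card_filter_le _ _, ?_⟩
  rw [natCast_card_filter]
  refine sum_congr rfl fun i hi => ?_
  split_ifs with h
  · exact h
  · exact (hx i hi).resolve_right h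

theorem sum_Icc_eq_two_mul_add_of_symm {R : Type*} [NonAssocSemiring R] {N m : ℕ} (hm : 2 * m < N)
    {g : ℕ → R} (hg : ∀ l ∈ Icc 1 (N - 1), g l = g (N - l)) :
    ∑ l ∈ Icc 1 (N - 1), g l = 2 * ∑ l ∈ Icc 1 m, g l + ∑ l ∈ Icc (m + 1) (N - m - 1), g l := by
  have reflect : ∑ l ∈ Ico (N - m) N, g l = ∑ l ∈ Ico 1 (m + 1), g l := by
    rw [sum_congr rfl fun l hl => hg l (by simp only [mem_Icc, mem_Ico] at hl ⊢; omega),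
      sum_Ico_reflect g _ (by omega)]
    congr 2 <;> omega
  simp only [← Ico_add_one_right_eq_Icc, Nat.sub_add_cancel (by omega : 1 ≤ N),
    Nat.sub_add_cancel (by omega : 1 ≤ N - m)]
  rw [← sum_Ico_consecutive g (by omega : 1 ≤ N - m) (by omega), reflect,
    ← sum_Ico_consecutive g (by omega : 1 ≤ m + 1) (by omega), two_mul]
  abel

end Sums

section Sine

theorem mul_sin_le_mul_sin {x y : ℝ} (hx : 0 ≤ x) (hxy : x ≤ y) (hy : y ≤ π) :
    x * sin y ≤ y * sin x := by
  rcases hx.eq_or_lt with rfl | hx₀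
  · simp
  have hy₀ : 0 < y := hx₀.trans_le hxy
  have chord := strictConcaveOn_sin_Icc.concaveOn.2 (Set.left_mem_Icc.2 pi_pos.le) ⟨hy₀.le, hy⟩
    (sub_nonneg.2 (div_le_one_of_le₀ hxy hy₀.le)) (div_nonneg hx hy₀.le) (sub_add_cancel 1 (x / y))
  simp only [smul_eq_mul, mul_zero, sin_zero, zero_add, div_mul_cancel₀ x hy₀.ne'] at chord
  calc x * sin y = y * (x / y * sin y) := by field_simp
    _ ≤ y * sin x := by gcongr

theorem sin_le_sin_of_le_of_le_pi_sub {x y : ℝ} (hx : 0 ≤ x) (hxy : x ≤ y) (hy : y ≤ π - x) :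
    sin x ≤ sin y := by
  rcases le_total y (π / 2) with h | h
  · exact sin_le_sin_of_le_of_le_pi_div_two (by linarith [pi_pos]) h hxy
  · rw [← sin_pi_sub y]
    exact sin_le_sin_of_le_of_le_pi_div_two (by linarith [pi_pos]) (by linarith) (by linarith)

end Sine

section CosSum

/-- The Dirichlet sum `∑ cos (2 l t)` over `1 ≤ l ≤ m`, as a function of the half-angle `t`. -/
noncomputable def cosSum (m : ℕ) (t : ℝ) : ℝ :=
  ∑ l ∈ Icc 1 m, cos (2 * l * t)

theorem sin_mul_two_mul_cosSum_add_one (m : ℕ) (t : ℝ) :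
    sin t * (2 * cosSum m t + 1) = sin ((2 * m + 1) * t) := by
  induction m with
  | zero => simp [cosSum]
  | succ m ih =>
    have telescope := two_mul_sin_mul_cos t (2 * (m + 1) * t)
    rw [← neg_sub, sin_neg] at telescope
    rw [cosSum] at ih ⊢
    rw [sum_Icc_succ_top (by omega)]
    push_cast at ih ⊢
    rw [show (2 * ((m : ℝ) + 1) + 1) * t = t + 2 * (m + 1) * t by ring]
    rw [show (2 * (m : ℝ) + 1) * t = 2 * (m + 1) * t - t by ring] at ih
    linarith

theorem sin_mul_cosSum_add_cosSum_succ_add_one (m : ℕ) (t : ℝ) :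
    sin t * (cosSum m t + cosSum (m + 1) t + 1) = sin (2 * (m + 1) * t) * cos t := by
  have hm := sin_mul_two_mul_cosSum_add_one m t
  have hm' := sin_mul_two_mul_cosSum_add_one (m + 1) t
  have average := two_mul_sin_mul_cos (2 * (m + 1) * t) t
  push_cast at hm'
  rw [show 2 * ((m : ℝ) + 1) * t - t = (2 * m + 1) * t by ring,
    show 2 * ((m : ℝ) + 1) * t + t = (2 * (m + 1) + 1) * t by ring] at average
  linarith

theorem abs_mul_cosSum_add_cosSum_succ_add_one_le {t : ℝ} (ht₀ : 0 < t) (ht : t < π / 2) (m : ℕ) :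
    |t * (cosSum m t + cosSum (m + 1) t + 1)| ≤ |sin (2 * (m + 1) * t)| := by
  have hsin : 0 < sin t := sin_pos_of_pos_of_lt_pi ht₀ (by linarith)
  have hcos : 0 < cos t := cos_pos_of_mem_Ioo ⟨by linarith, ht⟩
  have hcot : t * cos t ≤ sin t := by
    rw [← le_div_iff₀ hcos, ← tan_eq_sin_div_cos]
    exact le_tan ht₀.le ht
  refine le_of_mul_le_mul_left ?_ hsin
  calc sin t * |t * (cosSum m t + cosSum (m + 1) t + 1)|
      = |t * (sin t * (cosSum m t + cosSum (m + 1) t + 1))| := by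
        rw [← abs_of_pos hsin, ← abs_mul, abs_of_pos hsin, mul_left_comm]
    _ = t * cos t * |sin (2 * (m + 1) * t)| := by
        rw [sin_mul_cosSum_add_cosSum_succ_add_one, abs_mul, abs_mul, abs_of_pos ht₀,
          abs_of_pos hcos]
        ring
    _ ≤ sin t * |sin (2 * (m + 1) * t)| := by gcongr

theorem cosSum_lt_of_sin_le {m : ℕ} {h t : ℝ} (hsin₀ : 0 < sin (2 * h))
    (hsin : sin (2 * h) ≤ sin t) (hpeak : 1 < 2 * cos h * sin ((2 * m + 1) * h)) :
    cosSum m t < cosSum m h := by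
  have at_h : 1 / sin (2 * h) < 2 * cosSum m h + 1 := by
    rw [div_lt_iff₀ hsin₀, sin_two_mul]
    rw [← sin_mul_two_mul_cosSum_add_one] at hpeak
    linarith
  have at_t : 2 * cosSum m t + 1 ≤ 1 / sin t := by
    rw [le_div_iff₀ (hsin₀.trans_le hsin), mul_comm, sin_mul_two_mul_cosSum_add_one]
    exact sin_le_one _
  linarith [one_div_le_one_div_of_le hsin₀ hsin]

theorem one_lt_two_mul_cos_mul_sin {h ψ : ℝ} (h₀ : 0 ≤ h) (h₁ : h < π / 4) (hψ₀ : π / 4 ≤ ψ)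
    (hψ₁ : ψ ≤ 3 * π / 4) : 1 < 2 * cos h * sin ψ := by
  have hcos : √2 / 2 < cos h := by
    rw [← cos_pi_div_four]
    exact cos_lt_cos_of_nonneg_of_le_pi h₀ (by linarith [pi_pos]) h₁
  have hsin : √2 / 2 ≤ sin ψ := by
    rw [← sin_pi_div_four]
    exact sin_le_sin_of_le_of_le_pi_sub (by positivity) hψ₀ (by linarith)
  calc (1 : ℝ) = 2 * (√2 / 2) * (√2 / 2) := by linarith [mul_self_sqrt (zero_le_two (α := ℝ))]
    _ < 2 * cos h * (√2 / 2) := by gcongr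
    _ ≤ 2 * cos h * sin ψ := by gcongr; linarith [hcos, sqrt_nonneg 2]

end CosSum

section Rows

/-- The matrix entry `L^{(N,1)}_{k,l}` when `h = π / N`. -/
noncomputable def entry (h : ℝ) (k l : ℕ) : ℝ :=
  cos (2 * l * h) * (-1 + cos (2 * k * l * h))

/-- The sum of the first `m` entries of row `k`. For `h = π / N`, row `k = 1` gives the `s_m` that
define `k_c(N)`, and by symmetry this is half of row `k` applied to the symmetric block of
half-width `m`. -/
noncomputable def rowSum (h : ℝ) (k m : ℕ) : ℝ :=
  ∑ l ∈ Icc 1 m, entry h k l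

variable {h : ℝ} {N k l : ℕ}

theorem entry_one (h : ℝ) (l : ℕ) :
    entry h 1 l = cos (2 * l * h) * (-1 + cos (2 * l * h)) := by
  simp only [entry, Nat.cast_one, mul_one]

theorem rowSum_succ_right (h : ℝ) (k m : ℕ) :
    rowSum h k (m + 1) = rowSum h k m + entry h k (m + 1) :=
  sum_Icc_succ_top (by omega) _

theorem rowSum_succ_eq_cosSum (h : ℝ) (k m : ℕ) :
    rowSum h (k + 1) m =
      (cosSum m (k * h) + cosSum m ((k + 2) * h)) / 2 - cosSum m h := by
  simp only [rowSum, cosSum]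
  rw [← sum_add_distrib, sum_div, ← sum_sub_distrib]
  refine sum_congr rfl fun l _ => ?_
  have product := two_mul_cos_mul_cos (2 * ((k : ℝ) + 1) * l * h) (2 * l * h)
  rw [show 2 * ((k : ℝ) + 1) * l * h - 2 * l * h = 2 * l * (k * h) by ring,
    show 2 * ((k : ℝ) + 1) * l * h + 2 * l * h = 2 * l * ((k + 2) * h) by ring] at product
  rw [entry, ← product]
  push_cast
  ring

theorem rowSum_one_eq_cosSum (h : ℝ) (m : ℕ) :
    rowSum h 1 m = (m + cosSum m (2 * h)) / 2 - cosSum m h := by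
  simp [rowSum_succ_eq_cosSum h 0 m, cosSum]

theorem entry_sub_left (hN : N * h = π) (hk : k ≤ N) (l : ℕ) :
    entry h (N - k) l = entry h k l := by
  have reflect : 2 * ((N - k : ℕ) : ℝ) * l * h = l * (2 * π) - 2 * k * l * h := by
    rw [← hN, Nat.cast_sub hk]
    ring
  rw [entry, entry, reflect, cos_nat_mul_two_pi_sub]

theorem entry_sub_right (hN : N * h = π) (k : ℕ) (hl : l ≤ N) :
    entry h k (N - l) = entry h k l := by
  have reflect (j : ℕ) : 2 * (j : ℝ) * ((N - l : ℕ) : ℝ) * h = j * (2 * π) - 2 * j * l * h := by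
    rw [← hN, Nat.cast_sub hl]
    ring
  have reflect_one := reflect 1
  simp only [Nat.cast_one, mul_one] at reflect_one
  rw [entry, entry, reflect, reflect_one, cos_nat_mul_two_pi_sub]
  congr 1
  simp

theorem rowSum_sub_left (hN : N * h = π) (hk : k ≤ N) (m : ℕ) :
    rowSum h (N - k) m = rowSum h k m :=
  sum_congr rfl fun l _ => entry_sub_left hN hk l

end Rows

section FirstRow

variable {h : ℝ} {N l m : ℕ}

theorem entry_one_neg (h₀ : 0 < h) (hl₀ : 1 ≤ l) (hl : 2 * l * h < π / 2) : entry h 1 l < 0 := by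
  have : (0 : ℝ) < l := by exact_mod_cast hl₀
  have hcos : 0 < cos (2 * l * h) :=
    cos_pos_of_mem_Ioo ⟨by linarith [pi_pos, show 0 < 2 * l * h by positivity], hl⟩
  have hcos_lt : cos (2 * l * h) < 1 := by
    rw [← cos_zero]
    exact cos_lt_cos_of_nonneg_of_le_pi le_rfl (by linarith [pi_pos]) (by positivity)
  rw [entry_one]
  exact mul_neg_of_pos_of_neg hcos (by linarith)

theorem pi_div_two_le_of_rowSum_one_nonneg (h₀ : 0 < h) (hm : 1 ≤ m) (hs : 0 ≤ rowSum h 1 m) :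
    π / 2 ≤ 2 * m * h := by
  by_contra! hlt
  refine hs.not_gt (sum_neg (fun l hl => ?_) ⟨1, by simpa using hm⟩)
  rw [mem_Icc] at hl
  refine entry_one_neg h₀ hl.1 (lt_of_le_of_lt ?_ hlt)
  have : (l : ℝ) ≤ m := by exact_mod_cast hl.2
  gcongr

theorem entry_one_le_entry_one {i j : ℕ} (h₀ : 0 ≤ h) (hij : i ≤ j) (hj₀ : π / 2 ≤ 2 * j * h)
    (hj₁ : 2 * j * h ≤ π) : entry h 1 i ≤ entry h 1 j := by
  have hle : cos (2 * j * h) ≤ cos (2 * i * h) := by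
    refine cos_le_cos_of_nonneg_of_le_pi (by positivity) hj₁ ?_
    have : (i : ℝ) ≤ j := by exact_mod_cast hij
    gcongr
  have hneg : cos (2 * j * h) ≤ 0 :=
    cos_nonpos_of_pi_div_two_le_of_le hj₀ (by linarith)
  rw [entry_one, entry_one]
  nlinarith [cos_le_one (2 * i * h)]

theorem entry_one_nonneg (hl₀ : π / 2 ≤ 2 * l * h) (hl₁ : 2 * l * h ≤ π) : 0 ≤ entry h 1 l := by
  rw [entry_one]
  exact mul_nonneg_of_nonpos_of_nonpos
    (cos_nonpos_of_pi_div_two_le_of_le hl₀ (by linarith [pi_pos]))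
    (by linarith [cos_le_one (2 * l * h)])

theorem entry_one_of_two_mul_eq (hN : N * h = π) (hl : 2 * l = N) : entry h 1 l = 2 := by
  rw [entry_one, show 2 * (l : ℝ) * h = π by rw [← hN, ← hl]; push_cast; rfl, cos_pi]
  norm_num

theorem rowSum_one_add_mul_le_sum_mul_entry_one {M : ℕ} {x : ℕ → ℝ} (h₀ : 0 ≤ h) (hmM : m + 1 ≤ M)
    (hm : π / 2 ≤ 2 * (m + 1 : ℕ) * h) (hM : 2 * M * h ≤ π)
    (hx : ∀ l ∈ Icc 1 M, x l ∈ Set.Icc (0 : ℝ) 1) :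
    rowSum h 1 m + entry h 1 (m + 1) * (∑ l ∈ Icc 1 M, x l - m) ≤
      ∑ l ∈ Icc 1 M, x l * entry h 1 l := by
  have angle_mono {i j : ℕ} (hij : i ≤ j) : 2 * i * h ≤ 2 * j * h := by
    have : (i : ℝ) ≤ j := by exact_mod_cast hij
    gcongr
  have hsub : Icc 1 m ⊆ Icc 1 M := Icc_subset_Icc_right (by omega)
  have bathtub := sum_add_mul_le_sum_mul_of_bathtub hsub (a := entry h 1) (c := entry h 1 (m + 1))
    (fun l hl => (hx l hl).1) (fun l hl => (hx l (hsub hl)).2)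
    (fun l hl => entry_one_le_entry_one h₀ (by rw [mem_Icc] at hl; omega) hm
      ((angle_mono hmM).trans hM))
    (fun l hl => by
      simp only [mem_sdiff, mem_Icc] at hl
      exact entry_one_le_entry_one h₀ (by omega) (hm.trans (angle_mono (by omega)))
        ((angle_mono hl.1.2).trans hM))
  rwa [Nat.card_Icc, Nat.add_sub_cancel] at bathtub

theorem rowSum_one_nonneg (h₀ : 0 < h) (h₁ : h ≤ π / 4) (hm₀ : 3 * π / 4 ≤ (2 * m + 1) * h)
    (hm₁ : (2 * m + 1) * h ≤ π) : 0 ≤ rowSum h 1 m := by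
  have dirichlet_h : h * (2 * cosSum m h + 1) ≤ π / 4 := by
    have hsin : 0 < sin h := sin_pos_of_pos_of_lt_pi h₀ (by linarith [pi_pos])
    have hψ : sin ((2 * m + 1) * h) ≤ sin (π / 4) := by
      rw [← sin_pi_sub]
      exact sin_le_sin_of_le_of_le_pi_sub (by linarith) (by linarith) (by linarith)
    refine le_of_mul_le_mul_left ?_ hsin
    calc sin h * (h * (2 * cosSum m h + 1)) = h * sin ((2 * m + 1) * h) := by
          rw [mul_left_comm, sin_mul_two_mul_cosSum_add_one]
      _ ≤ h * sin (π / 4) := by gcongr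
      _ ≤ π / 4 * sin h := mul_sin_le_mul_sin h₀.le h₁ (by linarith [pi_pos])
      _ = sin h * (π / 4) := mul_comm _ _
  have dirichlet_two_h : -(π / 4) ≤ h * (2 * cosSum m (2 * h) + 1) := by
    have hsin : 0 < sin (2 * h) := sin_pos_of_pos_of_lt_pi (by linarith) (by linarith [pi_pos])
    have jordan := mul_sin_le_mul_sin (x := 2 * h) (y := π / 2) (by linarith) (by linarith)
      (by linarith [pi_pos])
    rw [sin_pi_div_two] at jordan
    refine le_of_mul_le_mul_left ?_ hsin
    calc sin (2 * h) * -(π / 4) ≤ h * -1 := by linarith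
      _ ≤ h * sin ((2 * m + 1) * (2 * h)) := by
          gcongr
          exact neg_one_le_sin _
      _ = sin (2 * h) * (h * (2 * cosSum m (2 * h) + 1)) := by
          rw [← sin_mul_two_mul_cosSum_add_one]
          ring
  refine nonneg_of_mul_nonneg_right ?_ h₀
  rw [rowSum_one_eq_cosSum]
  linarith

theorem rowSum_one_half_nonneg (hN₅ : 5 ≤ N) (hN : N * h = π) : 0 ≤ rowSum h 1 ((N - 1) / 2) := by
  have hN₅' : (5 : ℝ) ≤ N := by exact_mod_cast hN₅
  have h₀ : 0 < h := pos_of_mul_pos_right (hN ▸ pi_pos) (by positivity)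
  have hM₀ : 3 * (N : ℝ) ≤ 4 * (2 * ((N - 1) / 2 : ℕ) + 1) := by
    exact_mod_cast (by omega : 3 * N ≤ 4 * (2 * ((N - 1) / 2) + 1))
  have hM₁ : 2 * (((N - 1) / 2 : ℕ) : ℝ) + 1 ≤ N := by
    exact_mod_cast (by omega : 2 * ((N - 1) / 2) + 1 ≤ N)
  exact rowSum_one_nonneg h₀ (by nlinarith) (by nlinarith) (by nlinarith)

theorem le_four_mul_of_rowSum_one_nonneg (hN : N * h = π) (hm : 1 ≤ m) (hs : 0 ≤ rowSum h 1 m) :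
    N ≤ 4 * m := by
  have h₀ : 0 < h := pos_of_mul_pos_right (hN ▸ pi_pos) (by positivity)
  have hm' := pi_div_two_le_of_rowSum_one_nonneg h₀ hm hs
  have : (N : ℝ) ≤ 4 * m := le_of_mul_le_mul_right (by linarith) h₀
  exact_mod_cast this

theorem rowSum_one_add_rowSum_one_succ_nonneg (h₀ : 0 < h) (h₁ : h < π / 4)
    (hcos : cos (2 * (m + 1) * h) ≤ -(3 / 5)) :
    0 ≤ rowSum h 1 m + rowSum h 1 (m + 1) := by
  set φ : ℝ := 2 * (m + 1) * h
  have hsin : |sin φ| ≤ 4 / 5 :=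
    abs_le_of_sq_le_sq (by nlinarith [sin_sq_add_cos_sq φ]) (by norm_num)
  have hφ_ge : π / 2 + 3 / 5 ≤ φ := by
    have hφ_gt : π / 2 < φ := by
      by_contra! hle
      linarith [cos_nonneg_of_neg_pi_div_two_le_of_le
        (by linarith [pi_pos, show 0 ≤ φ by positivity]) hle]
    have := sin_le (sub_nonneg.2 hφ_gt.le)
    rw [sin_sub_pi_div_two] at this
    linarith
  have trapezoid_h : h * (cosSum m h + cosSum (m + 1) h + 1) ≤ 4 / 5 :=
    (le_abs_self _).trans
      ((abs_mul_cosSum_add_cosSum_succ_add_one_le h₀ (by linarith [pi_pos]) m).trans hsin)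
  have trapezoid_two_h :
      -1 ≤ 2 * h * (cosSum m (2 * h) + cosSum (m + 1) (2 * h) + 1) :=
    neg_le_of_abs_le <|
      (abs_mul_cosSum_add_cosSum_succ_add_one_le (by linarith) (by linarith) m).trans
        (abs_sin_le_one _)
  refine nonneg_of_mul_nonneg_right ?_ h₀
  rw [rowSum_one_eq_cosSum, rowSum_one_eq_cosSum]
  push_cast
  linarith [pi_gt_d2]

theorem neg_one_le_rowSum_one (h₀ : 0 < h) (h₁ : h < π / 4) (hs : 0 ≤ rowSum h 1 (m + 1)) :
    -1 ≤ rowSum h 1 m := by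
  have hsucc := rowSum_succ_right h 1 m
  rw [entry_one] at hsucc
  push_cast at hsucc
  have hcos_ge := neg_one_le_cos (2 * (m + 1) * h)
  have hcos_le := cos_le_one (2 * (m + 1) * h)
  rcases le_total (cos (2 * (m + 1) * h)) (-(3 / 5)) with hcos | hcos
  · have hentry_le : cos (2 * (m + 1) * h) * (-1 + cos (2 * (m + 1) * h)) ≤ 2 := by nlinarith
    linarith [rowSum_one_add_rowSum_one_succ_nonneg h₀ h₁ hcos]
  · have hentry_le : cos (2 * (m + 1) * h) * (-1 + cos (2 * (m + 1) * h)) ≤ 1 := by nlinarith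
    linarith

end FirstRow

section OtherRows

variable {h : ℝ} {N k m : ℕ}

theorem rowSum_neg_of_two_le (h₀ : 0 < h) (hk : 2 ≤ k) (hkh : (k + 3) * h ≤ π)
    (hm₀ : π / 4 ≤ (2 * m + 1) * h) (hm₁ : (2 * m + 1) * h ≤ 3 * π / 4) : rowSum h k m < 0 := by
  have hk' : (2 : ℝ) ≤ k := by exact_mod_cast hk
  have h₁ : 5 * h ≤ π := by nlinarith
  have peak {t : ℝ} (ht₀ : 2 * h ≤ t) (ht₁ : t ≤ π - 2 * h) : cosSum m t < cosSum m h :=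
    cosSum_lt_of_sin_le (sin_pos_of_pos_of_lt_pi (by linarith) (by linarith))
      (sin_le_sin_of_le_of_le_pi_sub (by linarith) ht₀ ht₁)
      (one_lt_two_mul_cos_mul_sin h₀.le (by linarith) hm₀ hm₁)
  obtain ⟨j, rfl⟩ : ∃ j, k = j + 1 := ⟨k - 1, by omega⟩
  push_cast at hk' hkh
  have hupper : cosSum m ((j + 2) * h) < cosSum m h := peak (by nlinarith) (by linarith)
  have hlower : cosSum m (j * h) ≤ cosSum m h := by
    rcases Nat.lt_or_ge j 2 with hj | hj
    · obtain rfl : j = 1 := by omega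
      simp
    · have : (2 : ℝ) ≤ j := by exact_mod_cast hj
      exact (peak (by gcongr) (by linarith)).le
  rw [rowSum_succ_eq_cosSum]
  linarith

theorem rowSum_neg (hN₅ : 5 ≤ N) (hN : N * h = π) (hm₀ : N ≤ 4 * (2 * m + 1)) (hm₁ : 2 * m + 1 ≤ N)
    (hs : rowSum h 1 m < 0) (hk₀ : 1 ≤ k) (hk₁ : k < N) : rowSum h k m < 0 := by
  have hN₅' : (5 : ℝ) ≤ N := by exact_mod_cast hN₅
  have h₀ : 0 < h := pos_of_mul_pos_right (hN ▸ pi_pos) (by positivity)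
  have hm₀' : (N : ℝ) ≤ 4 * (2 * m + 1) := by exact_mod_cast hm₀
  have hm₁' : 2 * (m : ℝ) + 1 ≤ N := by exact_mod_cast hm₁
  have hψ : (2 * m + 1) * h ≤ 3 * π / 4 := by
    by_contra! hlt
    exact hs.not_ge (rowSum_one_nonneg h₀ (by nlinarith) hlt.le (by nlinarith))
  wlog hk : 2 * k ≤ N generalizing k
  · rw [← rowSum_sub_left hN hk₁.le]
    exact this (by omega) (by omega) (by omega)
  rcases hk₀.eq_or_lt with rfl | hk₂
  · exact hs
  · have hk₃ : (k : ℝ) + 3 ≤ N := by exact_mod_cast (by omega : k + 3 ≤ N)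
    exact rowSum_neg_of_two_le h₀ hk₂ (by nlinarith) (by nlinarith) hψ

end OtherRows

section Feasible

variable {N m : ℕ} {x : ℕ → ℝ}

theorem entry_pi_div (N k l : ℕ) :
    entry (π / N) k l = cos (2 * π * l / N) * (-1 + cos (2 * π * k * l / N)) := by
  rw [entry, show 2 * (l : ℝ) * (π / N) = 2 * π * l / N by ring,
    show 2 * (k : ℝ) * l * (π / N) = 2 * π * k * l / N by ring]

theorem feasible_one_iff : feasible N 1 x ↔
    (∀ l ∈ Icc 1 (N - 1), x l = 0 ∨ x l = 1) ∧ (∀ l ∈ Icc 1 (N - 1), x l = x (N - l)) ∧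
      ∀ k ∈ Icc 1 (N - 1), ∑ l ∈ Icc 1 (N - 1), x l * entry (π / N) k l < 0 := by
  simp only [feasible, entry_pi_div, Nat.cast_one, mul_one, mul_assoc]

/-- The indicator of the indices at cyclic distance at most `m` from `0` modulo `N`. -/
def symmBlock (N m l : ℕ) : ℝ :=
  if l ≤ m ∨ N - l ≤ m then 1 else 0

theorem symmBlock_sub {l : ℕ} (hl : l ≤ N) : symmBlock N m (N - l) = symmBlock N m l := by
  simp only [symmBlock, Nat.sub_sub_self hl, or_comm]

theorem sum_symmBlock_mul (hm : 2 * m < N) {g : ℕ → ℝ} (hg : ∀ l ∈ Icc 1 (N - 1), g l = g (N - l)) :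
    ∑ l ∈ Icc 1 (N - 1), symmBlock N m l * g l = 2 * ∑ l ∈ Icc 1 m, g l := by
  have on_block : ∑ l ∈ Icc 1 m, symmBlock N m l * g l = ∑ l ∈ Icc 1 m, g l :=
    sum_congr rfl fun l hl => by rw [symmBlock, if_pos (.inl (mem_Icc.1 hl).2), one_mul]
  have off_block : ∑ l ∈ Icc (m + 1) (N - m - 1), symmBlock N m l * g l = 0 :=
    sum_eq_zero fun l hl => by
      rw [mem_Icc] at hl
      rw [symmBlock, if_neg (by omega), zero_mul]
  rw [sum_Icc_eq_two_mul_add_of_symm hm, on_block, off_block, add_zero]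
  intro l hl
  rw [symmBlock_sub (by rw [mem_Icc] at hl; omega), ← hg l hl]

theorem sum_symmBlock (hm : 2 * m < N) : ∑ l ∈ Icc 1 (N - 1), symmBlock N m l = 2 * m := by
  simpa using sum_symmBlock_mul hm (g := fun _ => 1) fun _ _ => rfl

theorem feasible_symmBlock (hN : 5 ≤ N) (hm₀ : N ≤ 4 * (2 * m + 1)) (hm₁ : 2 * m < N)
    (hs : rowSum (π / N) 1 m < 0) : feasible N 1 (symmBlock N m) := by
  have hπ : N * (π / N) = π := mul_div_cancel₀ π (by positivity)
  refine feasible_one_iff.2 ⟨fun l _ => ?_, fun l hl => ?_, fun k hk => ?_⟩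
  · rw [symmBlock]
    split_ifs <;> simp
  · exact (symmBlock_sub (by rw [mem_Icc] at hl; omega)).symm
  · rw [mem_Icc] at hk
    calc ∑ l ∈ Icc 1 (N - 1), symmBlock N m l * entry (π / N) k l = 2 * rowSum (π / N) k m :=
          sum_symmBlock_mul hm₁ fun l hl =>
            (entry_sub_right hπ k (by rw [mem_Icc] at hl; omega)).symm
      _ < 0 := by linarith [rowSum_neg hN hπ hm₀ hm₁ hs hk.1 (by omega)]

theorem sum_half_mul_entry_add_sum_middle_neg {M : ℕ} (hN : 2 ≤ N) (hM₀ : 2 * M < N)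
    (hM₁ : N ≤ 2 * (M + 1)) (hx : feasible N 1 x) :
    ∑ l ∈ Icc 1 M, x l * entry (π / N) 1 l + ∑ l ∈ Icc (M + 1) (N - M - 1), x l < 0 := by
  obtain ⟨-, hsymm, hrow⟩ := feasible_one_iff.1 hx
  have hπ : N * (π / N) = π := mul_div_cancel₀ π (Nat.cast_ne_zero.2 (by omega))
  have middle : ∑ l ∈ Icc (M + 1) (N - M - 1), x l * entry (π / N) 1 l =
      2 * ∑ l ∈ Icc (M + 1) (N - M - 1), x l := by
    rw [mul_sum]
    refine sum_congr rfl fun l hl => ?_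
    rw [entry_one_of_two_mul_eq hπ (by rw [mem_Icc] at hl; omega), mul_comm]
  have hrow₁ := hrow 1 (by rw [mem_Icc]; omega)
  rw [sum_Icc_eq_two_mul_add_of_symm hM₀ fun l hl => by
    rw [entry_sub_right hπ 1 (by rw [mem_Icc] at hl; omega), ← hsymm l hl], middle] at hrow₁
  linarith

theorem two_mul_mul_pi_div_le {j : ℕ} (hj : 2 * j ≤ N) : 2 * j * (π / N) ≤ π := by
  have hj' : 2 * (j : ℝ) ≤ N := by exact_mod_cast hj
  rw [mul_div_left_comm]
  exact mul_le_of_le_one_right pi_pos.le (div_le_one_of_le₀ hj' N.cast_nonneg)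

theorem rowSum_one_add_mul_add_sum_middle_neg {M : ℕ} (hM₀ : 2 * M < N) (hM₁ : N ≤ 2 * (M + 1))
    (hmM : m + 1 ≤ M) (hm : π / 2 ≤ 2 * (m + 1 : ℕ) * (π / N)) (hx : feasible N 1 x) :
    rowSum (π / N) 1 m + entry (π / N) 1 (m + 1) * (∑ l ∈ Icc 1 M, x l - m) +
      ∑ l ∈ Icc (M + 1) (N - M - 1), x l < 0 := by
  have hx_mem : ∀ l ∈ Icc 1 M, x l ∈ Set.Icc (0 : ℝ) 1 := fun l hl => by
    rcases hx.1 l (by rw [mem_Icc] at hl ⊢; omega) with h | h <;> simp [h]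
  have bathtub := rowSum_one_add_mul_le_sum_mul_entry_one (by positivity) hmM hm
    (two_mul_mul_pi_div_le hM₀.le) hx_mem
  linarith [sum_half_mul_entry_add_sum_middle_neg (by omega) hM₀ hM₁ hx]

theorem sum_le_of_feasible (hN : 5 ≤ N) (hm : 2 * (m + 1) < N)
    (hs : 0 ≤ rowSum (π / N) 1 (m + 1)) (hx : feasible N 1 x) :
    ∑ l ∈ Icc 1 (N - 1), x l ≤ 2 * m := by
  obtain ⟨M, hM₀, hM₁⟩ : ∃ M, 2 * M < N ∧ N ≤ 2 * (M + 1) := ⟨(N - 1) / 2, by omega, by omega⟩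
  have h₀ : 0 < π / N := by positivity
  have hangle := pi_div_two_le_of_rowSum_one_nonneg h₀ (Nat.le_add_left 1 m) hs
  have hrow := rowSum_one_add_mul_add_sum_middle_neg hM₀ hM₁ (by omega) hangle hx
  have hprev : -1 ≤ rowSum (π / N) 1 m :=
    neg_one_le_rowSum_one h₀ (by gcongr; exact_mod_cast hN) hs
  obtain ⟨n, -, hn⟩ := exists_nat_sum_eq_of_zero_or_one (S := Icc 1 M) fun l hl =>
    hx.1 l (by rw [mem_Icc] at hl ⊢; omega)
  obtain ⟨u, hu, hu_sum⟩ := exists_nat_sum_eq_of_zero_or_one (S := Icc (M + 1) (N - M - 1))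
    fun l hl => hx.1 l (by rw [mem_Icc] at hl ⊢; omega)
  have hu_le : u ≤ 1 := hu.trans (by rw [Nat.card_Icc]; omega)
  rw [hn, hu_sum] at hrow
  have hcount : 2 * n + u ≤ 2 * m := by
    rcases lt_trichotomy n m with hlt | rfl | hgt
    · omega
    · have : (u : ℝ) < 1 := by linarith
      have : u < 1 := by exact_mod_cast this
      omega
    · have hgt' : (m : ℝ) + 1 ≤ n := by exact_mod_cast hgt
      have hu₀ : (0 : ℝ) ≤ u := u.cast_nonneg
      rw [rowSum_succ_right] at hs
      nlinarith [entry_one_nonneg hangle (two_mul_mul_pi_div_le hm.le)]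
  rw [sum_Icc_eq_two_mul_add_of_symm hM₀ hx.2.1, hn, hu_sum]
  exact_mod_cast hcount

end Feasible

/-- For `N ≥ 5`, the maximum connectivity over feasible vectors for `(N, 1)` is
`2(k_c - 1)/(N - 1)`, where `k_c` is the least `k ∈ {1,…,N-1}` with `s_k ≥ 0`. -/
theorem max_connectivity_p_one (N : ℕ) (hN : 5 ≤ N)
    (s : ℕ → ℝ)
    (hs : ∀ k, s k = ∑ l ∈ Finset.Icc 1 k,
      Real.cos (2 * π * l / N) * (-1 + Real.cos (2 * π * l / N)))
    (kc : ℕ) (hkc : IsLeast {k | k ∈ Finset.Icc 1 (N - 1) ∧ 0 ≤ s k} kc) :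
    IsGreatest
      {μ : ℝ | ∃ x : ℕ → ℝ, feasible N 1 x ∧
        μ = (∑ l ∈ Finset.Icc 1 (N - 1), x l) / ((N : ℝ) - 1)}
      (2 * ((kc : ℝ) - 1) / ((N : ℝ) - 1)) := by
  have hs_rowSum : s = rowSum (π / N) 1 := funext fun k => by
    simp only [hs, rowSum, entry_pi_div, Nat.cast_one, mul_one]
  subst hs_rowSum
  have hπ : N * (π / N) = π := mul_div_cancel₀ π (by positivity)
  obtain ⟨⟨hkc_mem, hkc_nonneg⟩, hkc_min⟩ := hkc
  rw [mem_Icc] at hkc_mem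
  have hkc_le : kc ≤ (N - 1) / 2 :=
    hkc_min ⟨mem_Icc.2 (by omega), rowSum_one_half_nonneg hN hπ⟩
  have hkc_ge : N ≤ 4 * kc := le_four_mul_of_rowSum_one_nonneg hπ hkc_mem.1 hkc_nonneg
  obtain ⟨m, rfl⟩ : ∃ m, kc = m + 1 := ⟨kc - 1, by omega⟩
  have hneg : rowSum (π / N) 1 m < 0 := by
    by_contra! hm
    exact (hkc_min ⟨mem_Icc.2 (by omega), hm⟩).not_gt m.lt_succ_self
  rw [Nat.cast_add_one, add_sub_cancel_right]
  refine ⟨⟨symmBlock N m, feasible_symmBlock hN (by omega) (by omega) hneg, ?_⟩, ?_⟩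
  · rw [sum_symmBlock (by omega)]
  · rintro _ ⟨x, hx, rfl⟩
    have hN_pos : (0 : ℝ) ≤ N - 1 := sub_nonneg.2 (by norm_cast; omega)
    exact div_le_div_of_nonneg_right (sum_le_of_feasible hN (by omega) hkc_nonneg hx) hN_pos
end

section
/- Let Ñ ≥ 5 be an integer and for k ∈ {1,…,Ñ−1} set s_k = ∑_{l=1}^{k} cos(2πl/Ñ)·(−1 + cos(2πl/Ñ)). Then the set {k ∈ {1,…,Ñ−1} : s_k ≥ 0} is nonempty, and its least element k_c satisfies Ñ/4 < k_c ≤ Ñ−1; moreover s_k < 0 for every k with 1 ≤ k < Ñ/4. -/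
open Real Finset

/-!
Put `θ = 2π/Ñ`. While `l θ` stays in the first quadrant, `cos (l θ) * (-1 + cos (l θ))` is
nonpositive, and it is strictly negative at `l = 1`; so `s_k < 0` as long as `k θ ≤ π / 2`.
Over a full period, `∑ cos (l θ)` is the real part of a vanishing geometric sum, which leaves
`s_{Ñ-1} = ∑ cos² (l θ) ≥ 0` because the term `l = 0` is zero.
-/

lemma cos_mul_neg_one_add_cos_nonpos {x : ℝ} (hx : 0 ≤ cos x) : cos x * (-1 + cos x) ≤ 0 :=
  mul_nonpos_of_nonneg_of_nonpos hx (by linarith [cos_le_one x])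

lemma cos_lt_one_of_pos_of_lt_two_pi {x : ℝ} (hx₀ : 0 < x) (hx : x < 2 * π) : cos x < 1 :=
  (cos_le_one x).lt_of_ne fun h ↦ hx₀.ne' ((cos_eq_one_iff_of_lt_of_lt (by linarith) hx).1 h)

lemma sum_cos_mul_neg_one_add_cos_neg {θ : ℝ} (hθ₀ : 0 < θ) (hθ : θ < π / 2) {k : ℕ}
    (hk : 1 ≤ k) (hkθ : k * θ ≤ π / 2) :
    ∑ l ∈ Icc 1 k, cos (l * θ) * (-1 + cos (l * θ)) < 0 := by
  refine sum_neg' (fun l hl ↦ ?_) ⟨1, mem_Icc.2 ⟨le_rfl, hk⟩, ?_⟩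
  · have hlθ : l * θ ≤ π / 2 := hkθ.trans' (by gcongr; exact (mem_Icc.1 hl).2)
    exact cos_mul_neg_one_add_cos_nonpos <|
      cos_nonneg_of_neg_pi_div_two_le_of_le (by linarith [mul_nonneg l.cast_nonneg hθ₀.le]) hlθ
  · have hpos : 0 < cos θ := cos_pos_of_mem_Ioo ⟨by linarith, hθ⟩
    have hlt : cos θ < 1 := cos_lt_one_of_pos_of_lt_two_pi hθ₀ (by linarith)
    simpa using mul_neg_of_pos_of_neg hpos (by linarith : -1 + cos θ < 0)

lemma sum_range_cos_mul_eq_zero {θ : ℝ} {n : ℕ} (hθ : cos θ ≠ 1) (hn : cos (n * θ) = 1) :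
    ∑ l ∈ range n, cos (l * θ) = 0 := by
  set z : ℂ := Complex.exp (θ * Complex.I)
  have pow_eq (l : ℕ) : z ^ l = Complex.exp ((l * θ : ℝ) * Complex.I) := by
    rw [← Complex.exp_nat_mul]
    push_cast
    ring_nf
  have re_pow (l : ℕ) : (z ^ l).re = cos (l * θ) := by
    rw [pow_eq, Complex.exp_ofReal_mul_I_re]
  have z_ne_one : z ≠ 1 := fun hz ↦ hθ (by simpa [hz] using (re_pow 1).symm)
  have pow_n : z ^ n = 1 := by
    have sin_eq_zero : sin (n * θ) = 0 := sin_eq_zero_iff_cos_eq.2 (.inl hn)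
    rw [pow_eq, Complex.exp_mul_I, ← Complex.ofReal_cos, ← Complex.ofReal_sin, hn, sin_eq_zero]
    simp
  calc ∑ l ∈ range n, cos (l * θ) = (∑ l ∈ range n, z ^ l).re := by
        simp only [Complex.re_sum, re_pow]
    _ = 0 := by rw [geom_sum_eq z_ne_one, pow_n]; simp

lemma sum_cos_mul_neg_one_add_cos_nonneg {θ : ℝ} {n : ℕ} (hθ : cos θ ≠ 1)
    (hn : cos (n * θ) = 1) :
    0 ≤ ∑ l ∈ Icc 1 (n - 1), cos (l * θ) * (-1 + cos (l * θ)) := by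
  have sum_eq_sum_range : ∑ l ∈ Icc 1 (n - 1), cos (l * θ) * (-1 + cos (l * θ)) =
      ∑ l ∈ range n, cos (l * θ) * (-1 + cos (l * θ)) := by
    refine sum_subset (fun l hl ↦ by grind) fun l hl hl' ↦ ?_
    obtain rfl : l = 0 := by grind
    simp
  calc 0 ≤ ∑ l ∈ range n, cos (l * θ) ^ 2 := sum_nonneg fun l _ ↦ sq_nonneg _
    _ = ∑ l ∈ range n, cos (l * θ) ^ 2 - ∑ l ∈ range n, cos (l * θ) := by
        rw [sum_range_cos_mul_eq_zero hθ hn, sub_zero]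
    _ = ∑ l ∈ range n, cos (l * θ) * (-1 + cos (l * θ)) := by
        rw [← sum_sub_distrib]
        exact sum_congr rfl fun l _ ↦ by ring
    _ = _ := sum_eq_sum_range.symm

/-- For `Ñ ≥ 5` and `s_k = ∑_{l=1}^k cos(2πl/Ñ)(-1 + cos(2πl/Ñ))`, the set
`{k ∈ {1,…,Ñ-1} : s_k ≥ 0}` is nonempty, its least element `k_c` satisfies
`Ñ/4 < k_c ≤ Ñ-1`, and `s_k < 0` for all `k` with `1 ≤ k < Ñ/4`. -/
theorem kc_exists_and_location (Nt : ℕ) (hNt : 5 ≤ Nt) (s : ℕ → ℝ)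
    (hs : ∀ k, s k = ∑ l ∈ Finset.Icc 1 k,
      Real.cos (2 * π * l / Nt) * (-1 + Real.cos (2 * π * l / Nt))) :
    (∃ kc : ℕ, IsLeast {k | k ∈ Finset.Icc 1 (Nt - 1) ∧ 0 ≤ s k} kc ∧
      (Nt : ℝ) / 4 < (kc : ℝ) ∧ kc ≤ Nt - 1) ∧
    (∀ k : ℕ, 1 ≤ k → (k : ℝ) < (Nt : ℝ) / 4 → s k < 0) := by
  have five_le : (5 : ℝ) ≤ Nt := mod_cast hNt
  set θ : ℝ := 2 * π / Nt with hθ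
  have s_eq (k : ℕ) : s k = ∑ l ∈ Icc 1 k, cos (l * θ) * (-1 + cos (l * θ)) := by
    simp only [hs, hθ, mul_div_assoc', mul_comm]
  have period : Nt * θ = 2 * π := mul_div_cancel₀ _ (by positivity)
  have θ_pos : 0 < θ := by positivity
  have θ_lt : θ < π / 2 := by nlinarith
  have s_neg (k : ℕ) (hk : 1 ≤ k) (hkN : (k : ℝ) ≤ Nt / 4) : s k < 0 :=
    s_eq k ▸ sum_cos_mul_neg_one_add_cos_neg θ_pos θ_lt hk (by nlinarith)
  have s_last_nonneg : 0 ≤ s (Nt - 1) :=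
    s_eq (Nt - 1) ▸ sum_cos_mul_neg_one_add_cos_nonneg
      (cos_lt_one_of_pos_of_lt_two_pi θ_pos (by linarith)).ne (period ▸ cos_two_pi)
  have nonempty : {k | k ∈ Icc 1 (Nt - 1) ∧ 0 ≤ s k}.Nonempty :=
    ⟨Nt - 1, mem_Icc.2 ⟨by lia, le_rfl⟩, s_last_nonneg⟩
  refine ⟨?_, fun k hk hkN ↦ s_neg k hk hkN.le⟩
  have least := isLeast_csInf nonempty
  obtain ⟨hmem, kc_nonneg⟩ := least.1
  obtain ⟨one_le, le_last⟩ := mem_Icc.1 hmem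
  exact ⟨_, least, lt_of_not_ge fun hle ↦ (s_neg _ one_le hle).not_ge kc_nonneg, le_last⟩
end

section
/- Let Ñ ≥ 5 be an integer, let k_c = k_c(Ñ) be the least k ∈ {1,…,Ñ−1} with s_k ≥ 0, and let K_c ∈ (1/4, 1/2) be the unique root of 4πK + sin(4πK) − 4 sin(2πK) = 0 in that interval. Then k_c ≤ Ñ·K_c + 1/2 + 2π/(3Ñ). -/
open Real Finset

/-!
Put `t = π / Ñ`. Summing the Dirichlet kernel gives `4 sin (2t) s_k = D t x` at `x = (2k + 1) t`,
where `D t x = (x / t) sin (2t) + sin (2x) - 4 cos t sin x` tends to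
`G x = 2x + sin (2x) - 4 sin x` as `t → 0`, and `X = 2π K_c` is a zero of `G`. For `x ∈ [X, π]` the
cubic Taylor bound on `sin (2t)` gives `D t x ≥ G x - (4/3) t² x`, while `G x ≥ x (x - X)`. Hence
`s_k ≥ 0` as soon as `x ≥ X + (4/3) t²`, which is `k ≥ Ñ K_c - 1/2 + 2π / (3Ñ)`; the first index
with this property exceeds the right-hand side by less than one. For `x ∈ [π, 2π]` the sign of
`sin x` already makes `D t x` nonnegative.
-/

lemma two_mul_sin_mul_sum_Icc_cos (t : ℝ) (k : ℕ) :
    2 * sin t * ∑ l ∈ Icc 1 k, cos (2 * t * l) = sin ((2 * k + 1) * t) - sin t := by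
  induction k with
  | zero => simp
  | succ k ih =>
    have step : 2 * sin t * cos (2 * t * (k + 1 : ℕ))
        = sin ((2 * (k + 1 : ℕ) + 1) * t) - sin ((2 * k + 1) * t) := by
      rw [sin_sub_sin]
      push_cast
      ring_nf
    rw [sum_Icc_succ_top (by lia), mul_add, ih, step]
    ring

/-- The closed form of the sum `∑ l ∈ Icc 1 k, cos (2tl) (-1 + cos (2tl))`, multiplied by
`4 sin (2t)` and written as a function of `x = (2k + 1) t`, so that `x` may vary continuously.
At `t = 0` the division makes the first term vanish, and the value carries no information. -/
noncomputable def discreteSum (t x : ℝ) : ℝ :=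
  x / t * sin (2 * t) + sin (2 * x) - 4 * cos t * sin x

lemma four_mul_sin_mul_sum_eq_discreteSum {t : ℝ} (ht : t ≠ 0) (k : ℕ) :
    4 * sin (2 * t) * ∑ l ∈ Icc 1 k, cos (2 * t * l) * (-1 + cos (2 * t * l))
      = discreteSum t ((2 * k + 1) * t) := by
  have linearize (y : ℝ) : cos y * (-1 + cos y) = 1 / 2 + cos (2 * y) / 2 - cos y := by
    rw [cos_two_mul]
    ring
  have sum_double : 2 * sin (2 * t) * ∑ l ∈ Icc 1 k, cos (2 * (2 * t * l))
      = sin (2 * ((2 * k + 1) * t)) - sin (2 * t) := by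
    simpa only [mul_assoc, mul_left_comm] using two_mul_sin_mul_sum_Icc_cos (2 * t) k
  simp only [linearize, sum_sub_distrib, sum_add_distrib, ← sum_div, sum_const, Nat.card_Icc,
    add_tsub_cancel_right, nsmul_eq_mul]
  rw [discreteSum, mul_div_cancel_right₀ _ ht]
  linear_combination sum_double - 4 * cos t * two_mul_sin_mul_sum_Icc_cos t k
    - (2 + 4 * ∑ l ∈ Icc 1 k, cos (2 * t * l)) * sin_two_mul t

/-- The limit of `discreteSum t x` as `t → 0`, that is `4 ∫ y in 0..x, cos y (-1 + cos y)`.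
The equation defining `K_c` says that `continuumSum (2π K_c) = 0`. -/
noncomputable def continuumSum (x : ℝ) : ℝ := 2 * x + sin (2 * x) - 4 * sin x

lemma hasDerivAt_continuumSum (x : ℝ) :
    HasDerivAt continuumSum (4 * cos x * (cos x - 1)) x := by
  have h_double : HasDerivAt (fun y : ℝ ↦ 2 * y) 2 x := by
    simpa using (hasDerivAt_id x).const_mul 2
  refine ((h_double.add h_double.sin).sub ((hasDerivAt_sin x).const_mul 4)).congr_deriv ?_
  rw [cos_two_mul]
  ring

lemma monotoneOn_continuumSum : MonotoneOn continuumSum (Set.Icc (π / 2) π) := by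
  refine monotoneOn_of_hasDerivWithinAt_nonneg (convex_Icc _ _)
    (fun x _ ↦ (hasDerivAt_continuumSum x).continuousAt.continuousWithinAt)
    (fun x _ ↦ (hasDerivAt_continuumSum x).hasDerivWithinAt) fun x hx ↦ ?_
  rw [interior_Icc] at hx
  have hcos : cos x ≤ 0 := cos_nonpos_of_pi_div_two_le_of_le hx.1.le (by linarith [hx.2, pi_pos])
  exact mul_nonneg_of_nonpos_of_nonpos (by linarith) (by linarith)

lemma sin_two_pi_div_three : sin (2 * π / 3) = √3 / 2 := by
  rw [show 2 * π / 3 = π - π / 3 by ring, sin_pi_sub, sin_pi_div_three]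

lemma continuumSum_two_pi_div_three_neg : continuumSum (2 * π / 3) < 0 := by
  have h_sqrt : 1.7 ≤ √3 := le_sqrt_of_sq_le (by norm_num)
  rw [continuumSum, sin_two_mul, cos_two_pi_div_three, sin_two_pi_div_three]
  linarith [pi_lt_d2]

lemma two_pi_div_three_lt_of_continuumSum_nonneg {x : ℝ} (hx : π / 2 ≤ x)
    (h : 0 ≤ continuumSum x) : 2 * π / 3 < x := by
  by_contra! hlt
  have h_le : continuumSum x ≤ continuumSum (2 * π / 3) :=
    monotoneOn_continuumSum ⟨hx, by linarith [pi_pos]⟩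
      ⟨by linarith [pi_pos], by linarith [pi_pos]⟩ hlt
  linarith [continuumSum_two_pi_div_three_neg]

lemma two_mul_le_pi_mul_one_sub_cos {x : ℝ} (hx : π / 2 ≤ x) (hx' : x ≤ π) :
    2 * x ≤ π * (1 - cos x) := by
  have h_jordan : 1 - 2 / π * (π - x) ≤ -cos x := by
    simpa only [cos_pi_sub] using one_sub_mul_le_cos (sub_nonneg.2 hx') (by linarith)
  calc 2 * x = π * (1 + (1 - 2 / π * (π - x))) := by
        field_simp
        ring
    _ ≤ π * (1 - cos x) := by
        rw [sub_eq_add_neg 1 (cos x)]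
        gcongr

lemma two_mul_sub_le_four_mul_cos_mul_cos_sub_one {a x : ℝ} (ha : 2 * π / 3 ≤ a)
    (hx : 2 * π / 3 ≤ x) (hx' : x ≤ π) : 2 * x - a ≤ 4 * cos x * (cos x - 1) := by
  have h_half : cos x ≤ -1 / 2 := by
    rw [← cos_two_pi_div_three]
    exact cos_le_cos_of_nonneg_of_le_pi (by positivity) hx' hx
  have h_jordan : 2 * x ≤ π * (1 - cos x) :=
    two_mul_le_pi_mul_one_sub_cos (by linarith [pi_pos]) hx'
  calc 2 * x - a ≤ π * (1 - cos x) - 2 * π / 3 := by linarith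
    _ ≤ 4 * cos x * (cos x - 1) := by nlinarith [pi_lt_d2]

lemma mul_sub_le_continuumSum_sub {a x : ℝ} (ha : 2 * π / 3 ≤ a) (hax : a ≤ x) (hx : x ≤ π) :
    x * (x - a) ≤ continuumSum x - continuumSum a := by
  have h_deriv (y : ℝ) : HasDerivAt (fun y ↦ continuumSum y - y * (y - a))
      (4 * cos y * (cos y - 1) - (2 * y - a)) y := by
    have h_mul : HasDerivAt (fun y ↦ y * (y - a)) (2 * y - a) y :=
      ((hasDerivAt_id' y).mul ((hasDerivAt_id' y).sub_const a)).congr_deriv (by ring)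
    exact (hasDerivAt_continuumSum y).sub h_mul
  have h_mono : MonotoneOn (fun y ↦ continuumSum y - y * (y - a)) (Set.Icc a π) := by
    refine monotoneOn_of_hasDerivWithinAt_nonneg (convex_Icc _ _)
      (fun y _ ↦ (h_deriv y).continuousAt.continuousWithinAt)
      (fun y _ ↦ (h_deriv y).hasDerivWithinAt) fun y hy ↦ ?_
    rw [interior_Icc] at hy
    exact sub_nonneg.2 (two_mul_sub_le_four_mul_cos_mul_cos_sub_one ha (ha.trans hy.1.le) hy.2.le)
  have h_le : continuumSum a - a * (a - a) ≤ continuumSum x - x * (x - a) :=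
    h_mono ⟨le_rfl, hax.trans hx⟩ ⟨hax, hx⟩ hax
  linarith

lemma continuumSum_sub_le_discreteSum {t x : ℝ} (ht : 0 < t) (hx : 0 ≤ x) (hsin : 0 ≤ sin x) :
    continuumSum x - 4 / 3 * t ^ 2 * x ≤ discreteSum t x := by
  have h_taylor : 2 * x - 4 / 3 * t ^ 2 * x ≤ x / t * sin (2 * t) :=
    calc 2 * x - 4 / 3 * t ^ 2 * x = x / t * (2 * t - (2 * t) ^ 3 / 6) := by
          field_simp
          ring
      _ ≤ x / t * sin (2 * t) := by
          gcongr
          exact sin_ge_sub_cube (by positivity)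
  have h_cos : cos t * sin x ≤ sin x := mul_le_of_le_one_left hsin (cos_le_one t)
  rw [continuumSum, discreteSum]
  linarith

lemma discreteSum_nonneg_of_pi_le {t x : ℝ} (ht : 0 < t) (ht' : t ≤ π / 3) (hx : π ≤ x)
    (hx' : x ≤ 2 * π) : 0 ≤ discreteSum t x := by
  have h_sin_x : sin x ≤ 0 := by
    have := sin_nonneg_of_nonneg_of_le_pi (sub_nonneg.2 hx) (by linarith)
    rwa [sin_sub_pi, neg_nonneg] at this
  have h_sin_t : 0 ≤ sin (2 * t) := sin_nonneg_of_nonneg_of_le_pi (by linarith) (by linarith)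
  have h_cos_t : 1 / 2 ≤ cos t := by
    rw [← cos_pi_div_three]
    exact cos_le_cos_of_nonneg_of_le_pi ht.le (by linarith [pi_pos]) ht'
  have h_linear : 0 ≤ x / t * sin (2 * t) :=
    mul_nonneg (div_nonneg (pi_pos.le.trans hx) ht.le) h_sin_t
  have h_osc : 0 ≤ 2 * (sin x * (cos x - 2 * cos t)) :=
    mul_nonneg zero_le_two (mul_nonneg_of_nonpos_of_nonpos h_sin_x (by linarith [cos_le_one x]))
  rw [discreteSum, sin_two_mul x]
  linarith

lemma discreteSum_nonneg {t x X : ℝ} (ht : 0 < t) (ht' : t ≤ π / 3) (hX : π / 2 ≤ X)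
    (hX₀ : 0 ≤ continuumSum X) (hx : X + 4 / 3 * t ^ 2 ≤ x) (hx' : x ≤ 2 * π) :
    0 ≤ discreteSum t x := by
  rcases le_total π x with h | h
  · exact discreteSum_nonneg_of_pi_le ht ht' h hx'
  · have hXx : X ≤ x := by linarith [sq_nonneg t]
    have hx₀ : 0 ≤ x := by linarith [pi_pos]
    calc 0 ≤ x * (x - X - 4 / 3 * t ^ 2) := mul_nonneg hx₀ (by linarith)
      _ = x * (x - X) - 4 / 3 * t ^ 2 * x := by ring
      _ ≤ continuumSum x - 4 / 3 * t ^ 2 * x := by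
          linarith [mul_sub_le_continuumSum_sub
            (two_pi_div_three_lt_of_continuumSum_nonneg hX hX₀).le hXx h]
      _ ≤ discreteSum t x :=
          continuumSum_sub_le_discreteSum ht hx₀ (sin_nonneg_of_nonneg_of_le_pi hx₀ h)

lemma sum_cos_mul_neg_one_add_cos_nonneg_s17 {t X : ℝ} {k : ℕ} (ht : 0 < t) (ht' : t ≤ π / 3)
    (hX : π / 2 ≤ X) (hX₀ : 0 ≤ continuumSum X) (hk : X + 4 / 3 * t ^ 2 ≤ (2 * k + 1) * t)
    (hk' : (2 * k + 1) * t ≤ 2 * π) :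
    0 ≤ ∑ l ∈ Icc 1 k, cos (2 * t * l) * (-1 + cos (2 * t * l)) := by
  have h_sin : 0 < sin (2 * t) := sin_pos_of_pos_of_lt_pi (by linarith) (by linarith [pi_pos])
  refine nonneg_of_mul_nonneg_right ?_ (mul_pos four_pos h_sin)
  rw [four_mul_sin_mul_sum_eq_discreteSum ht.ne']
  exact discreteSum_nonneg ht ht' hX hX₀ hk hk'

/-- Upper bound of `k_c`: for `Ñ ≥ 5`, with `k_c` the least `k ∈ {1,…,Ñ-1}` such that
`s_k ≥ 0` and `K_c` the unique root of `4πK + sin(4πK) - 4 sin(2πK) = 0` in `(1/4, 1/2)`,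
one has `k_c ≤ Ñ K_c + 1/2 + 2π/(3Ñ)`. -/
theorem kc_upper_bound (Nt : ℕ) (hNt : 5 ≤ Nt) (s : ℕ → ℝ)
    (hs : ∀ k, s k = ∑ l ∈ Finset.Icc 1 k,
      Real.cos (2 * π * l / Nt) * (-1 + Real.cos (2 * π * l / Nt)))
    (kc : ℕ) (hkc : IsLeast {k | k ∈ Finset.Icc 1 (Nt - 1) ∧ 0 ≤ s k} kc)
    (Kc : ℝ) (hKc : Kc ∈ Set.Ioo (1 / 4 : ℝ) (1 / 2))
    (hKc0 : 4 * π * Kc + Real.sin (4 * π * Kc) - 4 * Real.sin (2 * π * Kc) = 0) :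
    (kc : ℝ) ≤ (Nt : ℝ) * Kc + 1 / 2 + 2 * π / (3 * Nt) := by
  by_contra! hlt
  have hN : (5 : ℝ) ≤ Nt := mod_cast hNt
  obtain ⟨k, rfl⟩ : ∃ k, kc = k + 1 := Nat.exists_eq_add_of_le' (mem_Icc.1 hkc.1.1).1
  have hkN : k + 1 ≤ Nt - 1 := (mem_Icc.1 hkc.1.1).2
  have hk_le : (k : ℝ) + 2 ≤ Nt := mod_cast (by lia : k + 2 ≤ Nt)
  obtain ⟨t, ht⟩ : ∃ t, t = π / Nt := ⟨_, rfl⟩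
  have ht₀ : 0 < t := by rw [ht]; positivity
  have htN : t * Nt = π := by rw [ht]; field_simp
  have h_shift : 2 * π / (3 * Nt) = 2 / 3 * t := by rw [ht]; field_simp
  rw [h_shift, Nat.cast_add_one] at hlt
  have hk_pos : (0 : ℝ) < k := by nlinarith [hKc.1]
  have h_root : continuumSum (2 * π * Kc) = 0 := by rw [continuumSum, ← hKc0]; ring_nf
  have h_lower : 2 * π * Kc + 4 / 3 * t ^ 2 ≤ (2 * k + 1) * t := by rw [← htN]; nlinarith
  have h_upper : (2 * k + 1) * t ≤ 2 * π := by nlinarith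
  have h_nonneg : 0 ≤ s k := by
    simpa only [hs, ht, mul_div_assoc', div_mul_eq_mul_div] using
      sum_cos_mul_neg_one_add_cos_nonneg_s17 ht₀ (by nlinarith) (by nlinarith [hKc.1, pi_pos])
        h_root.ge h_lower h_upper
  have h_mem : k ∈ Icc 1 (Nt - 1) := mem_Icc.2 ⟨mod_cast hk_pos, by lia⟩
  exact absurd (hkc.2 ⟨h_mem, h_nonneg⟩) (by lia)
end
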